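/- arXiv:math/0509397 — 2 statements merged into one kernel-verified Lean document; each statement's English description precedes it below -/
import Mathlib

section
/- König's theorem: in any finite bipartite graph, the maximal size of a matching equals the minimal size of a cover of the edges by vertices. -/
/-!
A matching is never larger than a cover: sending each edge of the matching to one of its endpoints
in the cover is injective (`matching_ncard_le_cover_ncard`). It remains to find a matching and a
cover of the same size. Take a cover of minimal size, consisting of `A ⊆ M` and `B ⊆ W`. By
minimality, every `S ⊆ A` has at least `|S|` neighbours outside `B`, since otherwise replacing `S`
by those neighbours would give a smaller cover. Hall's theorem therefore matches `A` into
`W \ B` (`exists_matching_of_minimal_cover`), and by symmetry it matches `B` into `M \ A`. The union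
of the two is a matching of size `|A| + |B|`.
-/

/-- Weak duality between matchings and covers. -/
lemma matching_ncard_le_cover_ncard {M W : Type*} [Finite M] [Finite W] {E : M → W → Prop}
    {F : Set (M × W)} (hE : ∀ e ∈ F, E e.1 e.2)
    (hF : ∀ e ∈ F, ∀ e' ∈ F, e ≠ e' → e.1 ≠ e'.1 ∧ e.2 ≠ e'.2)
    {C : Set (M ⊕ W)} (hC : ∀ m w, E m w → Sum.inl m ∈ C ∨ Sum.inr w ∈ C) :
    F.ncard ≤ C.ncard := by
  classical
  refine Set.ncard_le_ncard_of_injOn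
    (fun e => if Sum.inl e.1 ∈ C then Sum.inl e.1 else Sum.inr e.2) ?_ ?_ (Set.toFinite C)
  · intro e he
    have := hC _ _ (hE e he)
    by_cases h : Sum.inl e.1 ∈ C <;> simp_all
  · intro e he e' he' h
    by_contra hne
    obtain ⟨h1, h2⟩ := hF e he e' he' hne
    dsimp only at h
    split_ifs at h <;> simp_all

/-- One side of a minimal cover `A ∪ B` can be matched to vertices outside the cover. Hall's
condition for `S ⊆ A` is minimality against the cover `(A \ S) ∪ (B ∪ N(S))`. -/
lemma exists_matching_of_minimal_cover {M W : Type*} [Finite W] (E : M → W → Prop)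
    (A : Finset M) (B : Finset W) (hcov : ∀ m w, E m w → m ∈ A ∨ w ∈ B)
    (hmin : ∀ (A' : Finset M) (B' : Finset W), (∀ m w, E m w → m ∈ A' ∨ w ∈ B') →
      A.card + B.card ≤ A'.card + B'.card) :
    ∃ f : A → W, Function.Injective f ∧ ∀ a : A, E a (f a) ∧ f a ∉ B := by
  classical
  cases nonempty_fintype W
  let t : A → Finset W := fun a => {w | E a w ∧ w ∉ B}
  have hall : ∀ S : Finset A, S.card ≤ (S.biUnion t).card := by
    intro S
    let S' : Finset M := S.map (Function.Embedding.subtype _)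
    have hS' : S' ⊆ A := by
      intro m hm
      simp only [S', Finset.mem_map] at hm
      obtain ⟨a, -, rfl⟩ := hm
      exact a.2
    have h := hmin (A \ S') (B ∪ S.biUnion t) (by
      intro m w hmw
      rcases hcov m w hmw with hm | hw
      · by_cases hmS : m ∈ S'
        · right
          by_cases hw : w ∈ B
          · simp [hw]
          · simp only [S', Finset.mem_map] at hmS
            obtain ⟨a, ha, rfl⟩ := hmS
            exact Finset.mem_union_right _
              (Finset.mem_biUnion.2 ⟨a, ha, by simpa [t] using ⟨hmw, hw⟩⟩)
        · left
          simp [hm, hmS]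
      · right
        simp [hw])
    have h1 := Finset.card_sdiff_add_card_eq_card hS'
    have h2 := Finset.card_union_le B (S.biUnion t)
    have h3 : S'.card = S.card := Finset.card_map _
    omega
  obtain ⟨f, hf, hft⟩ := (Finset.all_card_le_biUnion_card_iff_exists_injective t).1 hall
  exact ⟨f, hf, fun a => by simpa [t] using hft a⟩

/-- Some cover has the same size as some matching. -/
lemma exists_matching_ncard_eq_cover_ncard (M W : Type*) [Finite M] [Finite W]
    (E : M → W → Prop) :
    ∃ (F : Set (M × W)) (C : Set (M ⊕ W)), (∀ e ∈ F, E e.1 e.2) ∧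
      (∀ e ∈ F, ∀ e' ∈ F, e ≠ e' → e.1 ≠ e'.1 ∧ e.2 ≠ e'.2) ∧
      (∀ m w, E m w → Sum.inl m ∈ C ∨ Sum.inr w ∈ C) ∧ F.ncard = C.ncard := by
  classical
  cases nonempty_fintype M
  cases nonempty_fintype W
  obtain ⟨⟨A, B⟩, hcov, hmin⟩ := Set.exists_min_image
    {p : Finset M × Finset W | ∀ m w, E m w → m ∈ p.1 ∨ w ∈ p.2}
    (fun p => p.1.card + p.2.card) (Set.toFinite _)
    ⟨(Finset.univ, Finset.univ), fun _ _ _ => Or.inl (Finset.mem_univ _)⟩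
  simp only [Set.mem_ofPred_eq, Prod.forall] at hcov hmin
  obtain ⟨f, hf, hfE⟩ := exists_matching_of_minimal_cover E A B hcov hmin
  obtain ⟨g, hg, hgE⟩ := exists_matching_of_minimal_cover (fun w m => E m w) B A
    (fun w m h => (hcov m w h).symm)
    (fun B' A' h => by
      have := hmin A' B' (fun m w hmw => (h w m hmw).symm)
      omega)
  let φ : A ⊕ B → M × W := Sum.elim (fun a => (a.1, f a)) (fun b => (g b, b.1))
  have hφ : ∀ x y, x ≠ y → (φ x).1 ≠ (φ y).1 ∧ (φ x).2 ≠ (φ y).2 := by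
    rintro (a | b) (a' | b') hne
    · have : a ≠ a' := fun h => hne (h ▸ rfl)
      exact ⟨fun h => this (Subtype.ext h), fun h => this (hf h)⟩
    · exact ⟨fun (h : a.1 = g b') => (hgE b').2 (h ▸ a.2),
        fun (h : f a = b'.1) => (hfE a).2 (h ▸ b'.2)⟩
    · exact ⟨fun (h : g b = a'.1) => (hgE b).2 (h ▸ a'.2),
        fun (h : b.1 = f a') => (hfE a').2 (h ▸ b.2)⟩
    · have : b ≠ b' := fun h => hne (h ▸ rfl)
      exact ⟨fun h => this (hg h), fun h => this (Subtype.ext h)⟩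
  have hinj : Function.Injective φ := fun x y h => by
    by_contra hne
    exact (hφ x y hne).1 (congrArg Prod.fst h)
  refine ⟨Set.range φ, (A.disjSum B : Finset (M ⊕ W)), ?_, ?_, ?_, ?_⟩
  · rintro _ ⟨a | b, rfl⟩
    · exact (hfE a).1
    · exact (hgE b).1
  · rintro _ ⟨x, rfl⟩ _ ⟨y, rfl⟩ hne
    exact hφ x y fun h => hne (h ▸ rfl)
  · intro m w h
    simpa using hcov m w h
  · rw [Set.ncard_coe_finset, Finset.card_disjSum, ← Set.image_univ,
      Set.ncard_image_of_injective _ hinj, Set.ncard_univ]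
    simp

/-- König's theorem: in any finite bipartite graph (with sides `M` and `W` and
edge relation `E`), the maximal size of a matching equals the minimal size of
a cover of the edges by vertices. -/
theorem konig_finite (M W : Type*) [Fintype M] [Fintype W] (E : M → W → Prop) :
    sSup {n : ℕ | ∃ F : Set (M × W),
        (∀ e ∈ F, E e.1 e.2) ∧
        (∀ e ∈ F, ∀ e' ∈ F, e ≠ e' → e.1 ≠ e'.1 ∧ e.2 ≠ e'.2) ∧
        F.ncard = n} =
      sInf {n : ℕ | ∃ C : Set (M ⊕ W),
        (∀ m w, E m w → Sum.inl m ∈ C ∨ Sum.inr w ∈ C) ∧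
        C.ncard = n} := by
  obtain ⟨F, C, hE, hF, hC, hcard⟩ := exists_matching_ncard_eq_cover_ncard M W E
  have hmax : IsGreatest {n : ℕ | ∃ F : Set (M × W),
      (∀ e ∈ F, E e.1 e.2) ∧
      (∀ e ∈ F, ∀ e' ∈ F, e ≠ e' → e.1 ≠ e'.1 ∧ e.2 ≠ e'.2) ∧
      F.ncard = n} C.ncard := by
    refine ⟨⟨F, hE, hF, hcard⟩, ?_⟩
    rintro _ ⟨F', hE', hF', rfl⟩
    exact matching_ncard_le_cover_ncard hE' hF' hC
  have hmin : IsLeast {n : ℕ | ∃ C : Set (M ⊕ W),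
      (∀ m w, E m w → Sum.inl m ∈ C ∨ Sum.inr w ∈ C) ∧
      C.ncard = n} C.ncard := by
    refine ⟨⟨C, hC, rfl⟩, ?_⟩
    rintro _ ⟨C', hC', rfl⟩
    exact hcard ▸ matching_ncard_le_cover_ncard hE hF hC'
  rw [hmax.csSup_eq, hmin.csInf_eq]
end

section
/- In any bipartite graph (possibly infinite) there exist a matching F and a cover C such that C consists of the choice of precisely one vertex from each edge of F: every vertex of C lies on an edge of F, and every edge of F contains exactly one vertex of C. -/
/-!
The two sides of the graph are called men (`M`) and women (`W`). A *wave* is a set `X` of men whose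
whole neighbourhood `N(X)` can be matched into `X`, and a graph is *hindered* if some wave has such a
matching that misses a man of `X`. Waves are closed under unions, so there is a largest wave `X`. The
graph that remains after deleting `X` and `N(X)` is unhindered, since a nonempty wave of it could be
added to `X`. By the key theorem `matchable_of_not_hindered`, all men of an unhindered graph can be
matched. The matching of `N(X)` into `X` together with a matching of the men outside `X` is the
matching `F`, and `C` consists of `N(X)` and of the men outside `X`. This is Aharoni's theorem.

The key theorem follows from the statement `Absorb c`: if an unhindered graph has a matching of all
men but a set `L` of size at most `c`, then it has one of all men. It is proved by induction on `c`.

* For finitely many men, `exists_safe_edge` matches one man at a time, keeping the rest unhindered.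
* For regular uncountable `c`, a *ladder* (`IsLadder`) of length `c` takes away one-leftover
  hindrances as long as they exist, and partners of prescribed men otherwise. The hindered stages
  are nonstationary (`IsLadder.null_hind`): otherwise the alternating paths from stationarily many
  leftover men would allow a rearrangement into a hindrance of the whole graph
  (`hindered_of_stationary`). Hence there is a closed unbounded set of unhindered stages. The gaps
  between consecutive ones are matched by the induction hypothesis, which gives a matching of any
  prescribed set of at most `c` men. Choosing this set closed under a suitable exchange operation
  (`KMem`), the new matching is combined with the given one (`absorb_regular`).
* The same ladders show that any set of at most `c` men can be included in a set of men that is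
  matched so that the rest remains unhindered (`Extend`, `extend_of_absorb`).
* For `ℵ₀` and singular `c`, many partial matchings, provided by `Extend` below `c`, are extended
  simultaneously in `ω` steps and combined in the style of Shelah's singular compactness theorem
  (`matchable_of_decomposition`).
-/

/-! ### Waves, hindrances and alternating paths -/

namespace KonigInf
universe u
variable {M W : Type u}

/-- The neighbours of the set of men `X`, after the women in `R` have been deleted. -/
def nbr (E : M → W → Prop) (R : Set W) (X : Set M) : Set W := {w | w ∉ R ∧ ∃ m ∈ X, E m w}

/-- `X` is a wave in the graph with the women `R` deleted: `j` matches every neighbour of `X`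
into `X`. Only the values of `j` on `nbr E R X` matter. -/
structure IsWave (E : M → W → Prop) (R : Set W) (X : Set M) (j : W → M) : Prop where
  mem : ∀ w ∈ nbr E R X, j w ∈ X
  adj : ∀ w ∈ nbr E R X, E (j w) w
  inj : Set.InjOn j (nbr E R X)

/-- The graph on the men `P`, with the women `R` deleted, is hindered: some wave inside `P`
leaves one of its own men unmatched. -/
def Hindered (E : M → W → Prop) (P : Set M) (R : Set W) : Prop :=
  ∃ X ⊆ P, ∃ j, IsWave E R X j ∧ ∃ x ∈ X, ∀ w ∈ nbr E R X, j w ≠ x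

/-- The men in `P` can be matched injectively to neighbours. -/
def Matchable (E : M → W → Prop) (P : Set M) : Prop :=
  ∃ f : M → W, Set.InjOn f P ∧ ∀ m ∈ P, E m (f m)

/-- The graph with the women in `R` deleted. -/
def del (E : M → W → Prop) (R : Set W) : M → W → Prop := fun m w => E m w ∧ w ∉ R

theorem Hindered.mono {E : M → W → Prop} {P P' : Set M} {R : Set W} (h : Hindered E P R)
    (hP : P ⊆ P') : Hindered E P' R := by
  obtain ⟨X, hX, r⟩ := h
  exact ⟨X, hX.trans hP, r⟩

theorem nbr_del (E : M → W → Prop) (R S : Set W) (X : Set M) :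
    nbr (del E R) S X = nbr E (R ∪ S) X := by
  ext w; simp only [nbr, del, Set.mem_ofPred_eq, Set.mem_union]; grind

theorem isWave_del {E : M → W → Prop} {R S : Set W} {X : Set M} {j : W → M} :
    IsWave (del E R) S X j ↔ IsWave E (R ∪ S) X j := by
  constructor
  · rintro ⟨h1, h2, h3⟩
    rw [nbr_del] at h1 h2 h3
    exact ⟨h1, fun w hw => (h2 w hw).1, h3⟩
  · rintro ⟨h1, h2, h3⟩
    rw [← nbr_del] at h1 h2 h3
    refine ⟨h1, fun w hw => ⟨h2 w hw, ?_⟩, h3⟩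
    rw [nbr_del] at hw
    exact fun h => hw.1 (Or.inl h)

theorem hindered_del {E : M → W → Prop} {P : Set M} {R S : Set W} :
    Hindered (del E R) P S ↔ Hindered E P (R ∪ S) := by
  simp only [Hindered, isWave_del, nbr_del]

theorem nbr_mono (E : M → W → Prop) (R : Set W) {X Y : Set M} (h : X ⊆ Y) :
    nbr E R X ⊆ nbr E R Y := fun _ hw => ⟨hw.1, hw.2.imp fun _ hm => ⟨h hm.1, hm.2⟩⟩

/-- `w` is the end of an alternating walk that starts at a man of `src`, goes from men to women
along edges and from women to men by `j`. The walk may end at a woman of `blk` but does not pass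
through one. -/
inductive Reach (E : M → W → Prop) (j : W → M) (blk : Set W) (src : Set M) : W → Prop
  | base {m : M} {w : W} : m ∈ src → E m w → Reach E j blk src w
  | step {y w : W} : Reach E j blk src y → y ∉ blk → E (j y) w → Reach E j blk src w

theorem Reach.mono {E : M → W → Prop} {j : W → M} {blk blk' : Set W} {src src' : Set M} {w : W}
    (h : Reach E j blk src w) (hb : blk' ⊆ blk) (hs : src ⊆ src') : Reach E j blk' src' w := by
  induction h with
  | base hm he => exact .base (hs hm) he
  | step _ hy he ih => exact .step ih (fun h => hy (hb h)) he

/-- An alternating walk from `x`, as in `Reach`, recorded as the list of its women, the last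
one first. -/
inductive RPath (E : M → W → Prop) (j : W → M) (blk : Set W) (x : M) : List W → Prop
  | single {w : W} : E x w → RPath E j blk x [w]
  | cons {w y : W} {t : List W} : RPath E j blk x (y :: t) → y ∉ blk → E (j y) w →
      RPath E j blk x (w :: y :: t)

theorem RPath.suffix {E : M → W → Prop} {j : W → M} {blk : Set W} {x : M} {l : List W}
    (h : RPath E j blk x l) {w : W} (hw : w ∈ l) :
    ∃ t, RPath E j blk x (w :: t) ∧ (w :: t) <:+ l := by
  induction h with
  | single he =>
    simp only [List.mem_singleton] at hw; subst hw
    exact ⟨[], .single he, List.suffix_rfl⟩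
  | @cons w' y t hp hy he ih =>
    rcases List.mem_cons.1 hw with rfl | hw
    · exact ⟨_, .cons hp hy he, List.suffix_rfl⟩
    · obtain ⟨t', h1, h2⟩ := ih hw
      exact ⟨t', h1, h2.trans (List.suffix_cons _ _)⟩

/-- Reachability is witnessed by a walk without repetitions whose inner women are unblocked and
reachable. -/
theorem Reach.exists_path {E : M → W → Prop} {j : W → M} {blk : Set W} {src : Set M} {w : W}
    (h : Reach E j blk src w) : ∃ m ∈ src, ∃ l, RPath E j blk m (w :: l) ∧ (w :: l).Nodup ∧
      ∀ y ∈ l, y ∉ blk ∧ Reach E j blk {m} y := by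
  induction h with
  | base hm he => exact ⟨_, hm, [], .single he, List.nodup_singleton _, by simp⟩
  | @step y w hr hy he ih =>
    obtain ⟨m, hm, l, hp, hn, hl⟩ := ih
    have key : ∀ {l : List W} , RPath E j blk m l → ∀ y ∈ l, Reach E j blk {m} y := by
      intro l hl
      induction hl with
      | single he => intro y hy; rw [List.mem_singleton.1 hy]; exact .base rfl he
      | cons hp hy he ih =>
        intro z hz
        rcases List.mem_cons.1 hz with rfl | hz
        · exact .step (ih _ List.mem_cons_self) hy he
        · exact ih z hz
    by_cases hw : w ∈ y :: l
    · obtain ⟨t, ht, hs⟩ := hp.suffix hw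
      refine ⟨m, hm, t, ht, hn.sublist hs.sublist, fun z hz => ?_⟩
      have hz' := hs.subset (List.mem_cons_of_mem w hz)
      refine ⟨?_, key hp z hz'⟩
      rcases List.mem_cons.1 hz' with rfl | h
      · exact hy
      · exact (hl z h).1
    · refine ⟨m, hm, y :: l, .cons hp hy he, List.nodup_cons.2 ⟨hw, hn⟩, fun z hz => ?_⟩
      refine ⟨?_, key hp z hz⟩
      rcases List.mem_cons.1 hz with rfl | h
      · exact hy
      · exact (hl z h).1

/-- Switching along a path: each woman gets the man from whom the walk entered her. This covers
all women of the path, including its last one, using `x` and the `j`-partners of the inner women. -/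
theorem RPath.exists_switch {E : M → W → Prop} {j : W → M} {blk : Set W} {x : M} {l : List W}
    (h : RPath E j blk x l) (hn : l.Nodup) {D : Set W} (hj : Set.InjOn j D) (hx : ∀ y ∈ D, j y ≠ x)
    (hD : ∀ y ∈ l.tail, y ∈ D) :
    ∃ pr : W → M, (∀ w ∈ l, E (pr w) w) ∧ (∀ w ∈ l, pr w = x ∨ ∃ y ∈ l.tail, pr w = j y) ∧
      Set.InjOn pr {w | w ∈ l} := by
  classical
  induction h with
  | single he =>
    refine ⟨fun _ => x, by simpa using he, by simp, by simp⟩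
  | @cons w y t hp hy he ih =>
    simp only [List.tail_cons] at hD ih ⊢
    obtain ⟨hw, hn⟩ := List.nodup_cons.1 hn
    obtain ⟨pr, h1, h2, h3⟩ := ih hn (fun z hz => hD z (List.mem_cons_of_mem _ hz))
    have hyt := (List.nodup_cons.1 hn).1
    have hne : ∀ z ∈ y :: t, pr z ≠ j y := by
      intro z hz hzy
      rcases h2 z hz with h | ⟨y', hy', h⟩
      · exact hx y (hD y List.mem_cons_self) (hzy.symm.trans h)
      · have := hj (hD y List.mem_cons_self) (hD y' (List.mem_cons_of_mem _ hy')) (hzy.symm.trans h)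
        exact hyt (this ▸ hy')
    have hu : ∀ z ∈ y :: t, Function.update pr w (j y) z = pr z := fun z hz =>
      Function.update_of_ne (ne_of_mem_of_not_mem hz hw) _ _
    refine ⟨Function.update pr w (j y), ?_, ?_, ?_⟩
    · intro z hz
      rcases List.mem_cons.1 hz with rfl | hz1
      · simpa using he
      · rw [hu z hz1]; exact h1 z hz1
    · intro z hz
      rcases List.mem_cons.1 hz with rfl | hz1
      · right; exact ⟨y, List.mem_cons_self, by simp⟩
      · rw [hu z hz1]
        exact (h2 z hz1).imp id fun ⟨y', hy', h⟩ => ⟨y', List.mem_cons_of_mem _ hy', h⟩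
    · intro a ha b hb hab
      rcases List.mem_cons.1 ha with ha1 | ha1 <;> rcases List.mem_cons.1 hb with hb1 | hb1
      · exact ha1.trans hb1.symm
      · rw [ha1, Function.update_self, hu b hb1] at hab
        exact absurd hab.symm (hne b hb1)
      · rw [hb1, Function.update_self, hu a ha1] at hab
        exact absurd hab (hne a ha1)
      · rw [hu a ha1, hu b hb1] at hab
        exact h3 ha1 hb1 hab

/-- Simultaneous switching along a family of disjoint alternating paths with distinct sources:
the last women of the paths become covered, and the sources are the only new men used. -/
theorem exists_switch {E : M → W → Prop} {j : W → M} {blk D : Set W} {T : Type*}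
    (s : T → M) (p : T → List W) (hp : ∀ t, RPath E j blk (s t) (p t)) (hn : ∀ t, (p t).Nodup)
    (hd : ∀ t t' w, w ∈ p t → w ∈ p t' → t = t') (hs : Function.Injective s)
    (hj : Set.InjOn j D) (hx : ∀ t, ∀ y ∈ D, j y ≠ s t) (hD : ∀ t, ∀ y ∈ (p t).tail, y ∈ D) :
    ∃ J : W → M, (∀ w, (∀ t, w ∉ p t) → J w = j w) ∧
      (∀ t, ∀ w ∈ p t, E (J w) w ∧ (J w = s t ∨ ∃ y ∈ (p t).tail, J w = j y)) ∧
      Set.InjOn J (D ∪ {w | ∃ t, w ∈ p t}) := by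
  classical
  choose pr h1 h2 h3 using fun t => (hp t).exists_switch (hn t) hj (hx t) (hD t)
  let J : W → M := fun w => if h : ∃ t, w ∈ p t then pr h.choose w else j w
  have hJ1 : ∀ w, (∀ t, w ∉ p t) → J w = j w := fun w hw => dif_neg (by push Not; exact hw)
  have hJ2 : ∀ t, ∀ w ∈ p t, J w = pr t w := by
    intro t w hw
    have h : ∃ t, w ∈ p t := ⟨t, hw⟩
    have := hd _ _ w h.choose_spec hw
    change dite _ _ _ = _
    rw [dif_pos h, this]
  have mix : ∀ t, ∀ w ∈ p t, ∀ w', (∀ t, w' ∉ p t) → w' ∈ D → J w ≠ J w' := by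
    intro t w hw w' hw' hD' he
    rw [hJ2 t w hw, hJ1 w' hw'] at he
    rcases h2 t w hw with h | ⟨y, hy, h⟩
    · exact hx t w' hD' (he.symm.trans h)
    · have := hj hD' (hD t y hy) (he.symm.trans h)
      exact hw' t (this ▸ List.mem_of_mem_tail hy)
  refine ⟨J, hJ1, fun t w hw => ⟨by rw [hJ2 t w hw]; exact h1 t w hw, by
    rw [hJ2 t w hw]; exact h2 t w hw⟩, ?_⟩
  intro a ha b hb hab
  by_cases hta : ∃ t, a ∈ p t <;> by_cases htb : ∃ t, b ∈ p t
  · obtain ⟨t, ht⟩ := hta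
    obtain ⟨t', ht'⟩ := htb
    rw [hJ2 t a ht, hJ2 t' b ht'] at hab
    have htt : t = t' := by
      rcases h2 t a ht with h | ⟨y, hy, h⟩ <;> rcases h2 t' b ht' with h' | ⟨y', hy', h'⟩
      · exact hs (by rw [← h, ← h', hab])
      · exact absurd (by rw [← h, ← h', hab]) (hx t y' (hD t' y' hy'))
      · exact absurd (by rw [← h, ← h', hab]) (hx t' y (hD t y hy))
      · have := hj (hD t y hy) (hD t' y' hy') (by rw [← h, ← h', hab])
        subst this
        exact hd _ _ y (List.mem_of_mem_tail hy) (List.mem_of_mem_tail hy')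
    subst htt
    exact h3 t ht ht' hab
  · obtain ⟨t, ht⟩ := hta
    push Not at htb
    exact absurd hab (mix t a ht b htb (hb.resolve_right (by simpa using htb)))
  · obtain ⟨t, ht⟩ := htb
    push Not at hta
    exact absurd hab.symm (mix t b ht a hta (ha.resolve_right (by simpa using hta)))
  · push Not at hta htb
    rw [hJ1 a hta, hJ1 b htb] at hab
    exact hj (ha.resolve_right (by simpa using hta)) (hb.resolve_right (by simpa using htb)) hab

end KonigInf

/-! ### Shrinking hindrances, maximal waves, safe edges -/

namespace KonigInf
universe u
variable {M W : Type u}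

/-- If the alternating walks from an unmatched man `x` only meet matched unblocked women, then the
men they visit form a hindrance in which `x` is the only man left over. -/
theorem reach_hindrance {E : M → W → Prop} {R D blk : Set W} {j : W → M} {x : M}
    (hj : Set.InjOn j D) (hx : ∀ w ∈ D, j w ≠ x) (hE : ∀ w ∈ D, E (j w) w)
    (hr : ∀ w, Reach (del E R) j blk {x} w → w ∈ D ∧ w ∉ blk) :
    ∃ Y : Set M, (∀ m ∈ Y, m = x ∨ ∃ w ∈ D, Reach (del E R) j blk {x} w ∧ j w = m) ∧
      IsWave E R Y j ∧ x ∈ Y ∧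
      (∀ w ∈ nbr E R Y, j w ≠ x) ∧ ∀ m ∈ Y, m ≠ x → ∃ w ∈ nbr E R Y, j w = m := by
  have hn : nbr E R ({m | m = x ∨ ∃ w, Reach (del E R) j blk {x} w ∧ j w = m}) =
      {w | Reach (del E R) j blk {x} w} := by
    ext w
    constructor
    · rintro ⟨hw, m, rfl | ⟨y, hy, rfl⟩, he⟩
      · exact Reach.base rfl ⟨he, hw⟩
      · exact Reach.step hy (hr y hy).2 ⟨he, hw⟩
    · intro hw
      cases hw with
      | base hm he => exact ⟨he.2, _, Or.inl hm, he.1⟩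
      | step hy hb he => exact ⟨he.2, _, Or.inr ⟨_, hy, rfl⟩, he.1⟩
  refine ⟨{m | m = x ∨ ∃ w, Reach (del E R) j blk {x} w ∧ j w = m}, ?_, ⟨?_, ?_, ?_⟩,
    Or.inl rfl, ?_, ?_⟩
  · rintro m (h | ⟨w, hw, h⟩)
    · exact Or.inl h
    · exact Or.inr ⟨w, (hr w hw).1, hw, h⟩
  · intro w hw; rw [hn] at hw; exact Or.inr ⟨w, hw, rfl⟩
  · intro w hw; rw [hn] at hw; exact hE w (hr w hw).1
  · rw [hn]; exact hj.mono fun w hw => (hr w hw).1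
  · rw [hn]; exact fun w hw => hx w (hr w hw).1
  · rw [hn]; rintro m (h | ⟨w, hw, h⟩) hm
    · exact absurd h hm
    · exact ⟨w, hw, h⟩

theorem reach_del_notMem {E : M → W → Prop} {R blk : Set W} {j : W → M} {s : Set M} {w : W}
    (h : Reach (del E R) j blk s w) : w ∉ R := by
  cases h with
  | base _ he => exact he.2
  | step _ _ he => exact he.2

/-- A hindrance can be shrunk to one missing exactly one man. -/
theorem Hindered.one_leftover {E : M → W → Prop} {P : Set M} {R : Set W} (h : Hindered E P R) :
    ∃ X ⊆ P, ∃ j, IsWave E R X j ∧ ∃ x ∈ X, (∀ w ∈ nbr E R X, j w ≠ x) ∧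
      ∀ m ∈ X, m ≠ x → ∃ w ∈ nbr E R X, j w = m := by
  obtain ⟨X, hX, j, hj, x, hx, hl⟩ := h
  have hr : ∀ w, Reach (del E R) j ∅ {x} w → w ∈ nbr E R X ∧ w ∉ (∅ : Set W) := by
    intro w hw
    refine ⟨?_, by simp⟩
    induction hw with
    | base hm he => rw [Set.mem_singleton_iff.1 hm] at he; exact ⟨he.2, x, hx, he.1⟩
    | step hy _ he ih => exact ⟨he.2, _, hj.mem _ ih, he.1⟩
  obtain ⟨Y, h1, h2, h3, h4, h5⟩ := reach_hindrance hj.inj hl hj.adj hr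
  refine ⟨Y, fun m hm => ?_, j, h2, x, h3, h4, h5⟩
  rcases h1 m hm with rfl | ⟨w, hw, -, rfl⟩
  · exact hX hx
  · exact hX (hj.mem w hw)

/-- Waves are closed under unions: each woman is given the partner assigned by the first wave,
in a well-ordering of the index set, that has her as a neighbour. -/
theorem isWave_iUnion [Nonempty M] {E : M → W → Prop} {R : Set W} {I : Type*} (X : I → Set M)
    (j : I → W → M) (h : ∀ i, IsWave E R (X i) (j i)) : ∃ J, IsWave E R (⋃ i, X i) J := by
  classical
  let r : I → I → Prop := WellOrderingRel
  have wf : WellFounded r := WellOrderingRel.isWellOrder.wf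
  have key : ∀ w ∈ nbr E R (⋃ i, X i), ∃ i, w ∈ nbr E R (X i) ∧
      ∀ i', w ∈ nbr E R (X i') → ¬ r i' i := by
    rintro w ⟨hw, m, hm, he⟩
    obtain ⟨i, hi⟩ := Set.mem_iUnion.1 hm
    obtain ⟨i0, h1, h2⟩ := wf.has_min {i | w ∈ nbr E R (X i)} ⟨i, hw, m, hi, he⟩
    exact ⟨i0, h1, h2⟩
  choose i hi hmin using key
  refine ⟨fun w => if hw : w ∈ nbr E R (⋃ i, X i) then j (i w hw) w else Classical.arbitrary M,
    ?_, ?_, ?_⟩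
  · intro w hw
    simp only [hw, dite_true]
    exact Set.mem_iUnion.2 ⟨_, (h _).mem w (hi w hw)⟩
  · intro w hw
    simp only [hw, dite_true]
    exact (h _).adj w (hi w hw)
  · intro w hw w' hw' he
    simp only [hw, hw', dite_true] at he
    rcases trichotomous_of r (i w hw) (i w' hw') with hlt | heq | hlt
    · refine absurd hlt (hmin w' hw' _ ⟨hw'.1, _, (h _).mem w (hi w hw), ?_⟩)
      rw [he]; exact (h _).adj w' (hi w' hw')
    · rw [← heq] at he
      exact (h _).inj (hi w hw) (heq ▸ hi w' hw') he
    · refine absurd hlt (hmin w hw _ ⟨hw.1, _, (h _).mem w' (hi w' hw'), ?_⟩)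
      rw [← he]; exact (h _).adj w (hi w hw)

theorem exists_max_wave [Nonempty M] (E : M → W → Prop) (P : Set M) (R : Set W) :
    ∃ X ⊆ P, ∃ j, IsWave E R X j ∧ ∀ X' ⊆ P, ∀ j', IsWave E R X' j' → X' ⊆ X := by
  let I := {q : Set M × (W → M) // q.1 ⊆ P ∧ IsWave E R q.1 q.2}
  obtain ⟨J, hJ⟩ := isWave_iUnion (fun i : I => i.1.1) (fun i => i.1.2) (fun i => i.2.2)
  exact ⟨_, Set.iUnion_subset fun i => i.2.1, J, hJ, fun X' hX' j' hj' =>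
    Set.subset_iUnion (fun i : I => i.1.1) ⟨(X', j'), hX', hj'⟩⟩

/-- A hindrance `X` that arises by deleting a neighbour `b` of `X`: if alternating walks from the
leftover man `x` miss `b`, there was a hindrance already; otherwise switching along a path from `x`
to `b` turns `X` into a wave. -/
theorem augment {E : M → W → Prop} {R : Set W} {X : Set M} {k : W → M} {b : W} {x : M}
    (hk : IsWave E (insert b R) X k) (hx : x ∈ X) (hl : ∀ w ∈ nbr E (insert b R) X, k w ≠ x)
    (hb : b ∈ nbr E R X) : Hindered E X R ∨ ∃ k', IsWave E R X k' := by
  have hn : ∀ w, w ∈ nbr E R X → w ≠ b → w ∈ nbr E (insert b R) X :=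
    fun w hw hne => ⟨by simp [hne, hw.1], hw.2⟩
  have hr : ∀ w, Reach (del E R) k {b} {x} w → w ∈ nbr E R X := by
    intro w hw
    induction hw with
    | base hm he => rw [Set.mem_singleton_iff.1 hm] at he; exact ⟨he.2, x, hx, he.1⟩
    | step hy hyb he ih => exact ⟨he.2, _, hk.mem _ (hn _ ih hyb), he.1⟩
  by_cases hR : Reach (del E R) k {b} {x} b
  · right
    obtain ⟨m, hm, l, hp, hnd, hl'⟩ := hR.exists_path
    rw [Set.mem_singleton_iff] at hm; subst hm
    obtain ⟨J, h1, h2, h3⟩ := exists_switch (T := Unit) (D := nbr E (insert b R) X)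
      (fun _ => m) (fun _ => b :: l) (fun _ => hp) (fun _ => hnd) (fun _ _ _ _ _ => rfl)
      (fun _ _ _ => rfl) hk.inj (fun _ => hl)
      (fun _ y hy => hn y (hr y (hl' y hy).2) (hl' y hy).1)
    refine ⟨J, fun w hw => ?_, fun w hw => ?_, h3.mono fun w hw => ?_⟩
    · by_cases hwl : w ∈ b :: l
      · rcases (h2 () w hwl).2 with h | ⟨y, hy, h⟩
        · rw [h]; exact hx
        · rw [h]; exact hk.mem y (hn y (hr y (hl' y hy).2) (hl' y hy).1)
      · rw [h1 w fun _ => hwl]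
        exact hk.mem w (hn w hw fun h => hwl (h ▸ List.mem_cons_self))
    · by_cases hwl : w ∈ b :: l
      · exact (h2 () w hwl).1.1
      · rw [h1 w fun _ => hwl]
        exact hk.adj w (hn w hw fun h => hwl (h ▸ List.mem_cons_self))
    · by_cases hwb : w = b
      · exact Or.inr ⟨(), hwb ▸ List.mem_cons_self⟩
      · exact Or.inl (hn w hw hwb)
  · left
    have hne : ∀ w, Reach (del E R) k {b} {x} w → w ≠ b := by rintro w hw rfl; exact hR hw
    obtain ⟨Y, h1, h2, h3, h4, -⟩ := reach_hindrance (R := R) (blk := {b}) hk.inj hl hk.adj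
      (fun w hw => ⟨hn w (hr w hw) (hne w hw), hne w hw⟩)
    refine ⟨Y, fun m hm => ?_, k, h2, x, h3, h4⟩
    rcases h1 m hm with rfl | ⟨w, hw, -, rfl⟩
    · exact hx
    · exact hk.mem w hw

/-- In an unhindered graph each man `a` has a neighbour `b` such that deleting both leaves the graph
unhindered. With `X` the largest wave, `b` is the partner of `a` if `a ∈ X`, and a neighbour of `a`
outside `nbr E R X` otherwise. -/
theorem exists_safe_edge {E : M → W → Prop} {P : Set M} {R : Set W} (hU : ¬ Hindered E P R) {a : M}
    (ha : a ∈ P) : ∃ b, b ∉ R ∧ E a b ∧ ¬ Hindered E (P \ {a}) (insert b R) := by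
  classical
  have : Nonempty M := ⟨a⟩
  obtain ⟨X, hX, j, hj, hmax⟩ := exists_max_wave E P R
  by_cases haX : a ∈ X
  · have : ∃ b ∈ nbr E R X, j b = a := by
      by_contra! h
      exact hU ⟨X, hX, j, hj, a, haX, h⟩
    obtain ⟨b, hb, hba⟩ := this
    refine ⟨b, hb.1, hba ▸ hj.adj b hb, ?_⟩
    rintro ⟨Y, hY, k, hk, x, hx, hl⟩
    apply hU
    have hout : ∀ w ∈ nbr E R X, w ∉ nbr E (insert b R) Y → j w ∉ Y := by
      intro w hw hwY hjw
      by_cases hwb : w = b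
      · rw [hwb, hba] at hjw; exact (hY hjw).2 rfl
      · exact hwY ⟨by simp [hwb, hw.1], _, hjw, hj.adj w hw⟩
    have hcase : ∀ w ∈ nbr E R (Y ∪ X), w ∉ nbr E (insert b R) Y → w ∈ nbr E R X := by
      rintro w ⟨hw, m, hm | hm, he⟩ hwY
      · by_cases hwb : w = b
        · rwa [hwb]
        · exact absurd ⟨by simp [hwb, hw], m, hm, he⟩ hwY
      · exact ⟨hw, m, hm, he⟩
    refine ⟨Y ∪ X, Set.union_subset (hY.trans Set.sdiff_subset) hX,
      fun w => if w ∈ nbr E (insert b R) Y then k w else j w, ⟨?_, ?_, ?_⟩, x, Or.inl hx, ?_⟩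
    · intro w hw
      split_ifs with h
      · exact Or.inl (hk.mem w h)
      · exact Or.inr (hj.mem w (hcase w hw h))
    · intro w hw
      split_ifs with h
      · exact hk.adj w h
      · exact hj.adj w (hcase w hw h)
    · intro w hw w' hw' he
      dsimp only at he
      split_ifs at he with h h' h'
      · exact hk.inj h h' he
      · exact absurd (he ▸ hk.mem w h) (hout w' (hcase w' hw' h') h')
      · exact absurd (he ▸ hk.mem w' h') (hout w (hcase w hw h) h)
      · exact hj.inj (hcase w hw h) (hcase w' hw' h') he
    · intro w hw
      dsimp only
      split_ifs with h
      · exact hl w h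
      · intro he
        exact hout w (hcase w hw h) h (he ▸ hx)
  · have : ∃ b, b ∉ R ∧ E a b ∧ b ∉ nbr E R X := by
      by_contra! h
      have hn : nbr E R (insert a X) = nbr E R X := by
        apply subset_antisymm _ (nbr_mono E R (Set.subset_insert _ _))
        rintro w ⟨hw, m, rfl | hm, he⟩
        · exact h w hw he
        · exact ⟨hw, m, hm, he⟩
      refine hU ⟨insert a X, Set.insert_subset ha hX, j, ⟨?_, ?_, ?_⟩, a, Or.inl rfl, ?_⟩ <;>
        rw [hn]
      · exact fun w hw => Or.inr (hj.mem w hw)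
      · exact hj.adj
      · exact hj.inj
      · exact fun w hw he => haX (he ▸ hj.mem w hw)
    obtain ⟨b, hbR, hab, hbX⟩ := this
    refine ⟨b, hbR, hab, ?_⟩
    rintro ⟨Y, hY, k, hk, x, hx, hl⟩
    have hYP := hY.trans Set.sdiff_subset
    by_cases hbY : b ∈ nbr E R Y
    · rcases augment hk hx hl hbY with h | ⟨k', hk'⟩
      · exact hU (h.mono hYP)
      · exact hbX (nbr_mono E R (hmax Y hYP k' hk') hbY)
    · have hn : nbr E (insert b R) Y = nbr E R Y := by
        ext w
        refine ⟨fun hw => ⟨fun h => hw.1 (Or.inr h), hw.2⟩, fun hw => ⟨?_, hw.2⟩⟩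
        rintro (rfl | h)
        · exact hbY hw
        · exact hw.1 h
      obtain ⟨k1, k2, k3⟩ := hk
      rw [hn] at k1 k2 k3 hl
      exact hU ⟨Y, hYP, k, ⟨k1, k2, k3⟩, x, hx, hl⟩

/-- A wave followed by a wave of what remains is a wave. -/
theorem IsWave.join {E : M → W → Prop} {R : Set W} {X Y : Set M} {j k : W → M} (hj : IsWave E R X j)
    (hk : IsWave E (R ∪ nbr E R X) Y k) (hXY : Disjoint X Y) :
    ∃ J, IsWave E R (X ∪ Y) J ∧ (∀ w ∈ nbr E R X, J w = j w) ∧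
      ∀ w ∉ nbr E R X, J w = k w := by
  classical
  have hcase : ∀ w ∈ nbr E R (X ∪ Y), w ∉ nbr E R X → w ∈ nbr E (R ∪ nbr E R X) Y := by
    rintro w ⟨hw, m, hm | hm, he⟩ h
    · exact absurd ⟨hw, m, hm, he⟩ h
    · exact ⟨by simp [hw, h], m, hm, he⟩
  refine ⟨fun w => if w ∈ nbr E R X then j w else k w, ⟨?_, ?_, ?_⟩, fun w hw => if_pos hw,
    fun w hw => if_neg hw⟩
  · intro w hw
    split_ifs with h
    · exact Or.inl (hj.mem w h)
    · exact Or.inr (hk.mem w (hcase w hw h))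
  · intro w hw
    split_ifs with h
    · exact hj.adj w h
    · exact hk.adj w (hcase w hw h)
  · intro w hw w' hw' he
    dsimp only at he
    split_ifs at he with h h' h'
    · exact hj.inj h h' he
    · exact absurd he (hXY.ne_of_mem (hj.mem w h) (hk.mem w' (hcase w' hw' h')))
    · exact absurd he.symm (hXY.ne_of_mem (hj.mem w' h') (hk.mem w (hcase w hw h)))
    · exact hk.inj (hcase w hw h) (hcase w' hw' h') he

end KonigInf

/-! ### Nonstationary sets in a regular uncountable index type -/

namespace KonigInf
universe u
open Cardinal Set
set_option linter.unusedSectionVars false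

/-- `ι` is a well-order whose cardinality is regular and uncountable and whose proper initial
segments are smaller, that is, its order type is a regular uncountable initial ordinal. -/
class RegIdx (ι : Type u) [LinearOrder ι] [WellFoundedLT ι] : Prop where
  reg : (#ι).IsRegular
  unc : ℵ₀ < #ι
  Iio_lt : ∀ i : ι, #(Iio i) < #ι

theorem exists_regIdx (κ : Cardinal.{u}) (hr : κ.IsRegular) (hu : ℵ₀ < κ) :
    ∃ (ι : Type u) (_ : LinearOrder ι) (_ : WellFoundedLT ι), RegIdx ι ∧ #ι = κ := by
  refine ⟨κ.ord.ToType, inferInstance, inferInstance, ⟨?_, ?_, ?_⟩, mk_ord_toType κ⟩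
  · rwa [mk_ord_toType]
  · rwa [mk_ord_toType]
  · intro i; exact mk_Iio_lt i (by simp)

variable {ι : Type u} [LinearOrder ι] [WellFoundedLT ι] [RegIdx ι]

theorem mk_iUnion_lt {I Y : Type u} (hI : #I < #ι) (S : I → Set Y) (hS : ∀ i, #(S i) < #ι) :
    #(⋃ i, S i) < #ι :=
  (card_iUnion_lt_iff_forall_of_isRegular (RegIdx.reg (ι := ι)) hI).2 hS

theorem mk_union_lt {Y : Type u} {S T : Set Y} (hS : #S < #ι) (hT : #T < #ι) :
    #(S ∪ T : Set Y) < #ι :=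
  (mk_union_le _ _).trans_lt (add_lt_of_lt (RegIdx.unc (ι := ι)).le hS hT)

theorem mk_Iic_lt (i : ι) : #(Iic i) < #ι := by
  rw [← Iio_insert]
  refine mk_insert_le.trans_lt (add_lt_of_lt (RegIdx.unc (ι := ι)).le (RegIdx.Iio_lt i) ?_)
  exact one_lt_aleph0.trans (RegIdx.unc (ι := ι))

theorem exists_bound {I : Type u} (hI : #I < #ι) (f : I → ι) : ∃ i, ∀ x, f x < i := by
  by_contra! h
  have : (⋃ x, Iic (f x)) = Set.univ := by
    ext i; simpa using h i
  have h2 := mk_iUnion_lt (ι := ι) hI (fun x => Iic (f x)) (fun x => mk_Iic_lt _)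
  rw [this, mk_univ] at h2
  exact lt_irrefl _ h2

theorem mk_nat_lt : #(ULift.{u} ℕ) < #ι := by
  simpa using RegIdx.unc (ι := ι)

theorem exists_bound_nat (f : ℕ → ι) : ∃ i, ∀ n, f n < i := by
  obtain ⟨i, hi⟩ := exists_bound (mk_nat_lt (ι := ι)) (fun n => f n.down)
  exact ⟨i, fun n => hi ⟨n⟩⟩

theorem mk_iUnion_nat_lt {Y : Type u} (S : ℕ → Set Y) (hS : ∀ i, #(S i) < #ι) :
    #(⋃ i, S i) < #ι := by
  have := mk_iUnion_lt (mk_nat_lt (ι := ι)) (fun n => S n.down) (fun n => hS n.down)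
  refine lt_of_le_of_lt (mk_le_mk_of_subset ?_) this
  exact iUnion_subset fun n => subset_iUnion (fun n : ULift ℕ => S n.down) ⟨n⟩

/-- `N` is nonstationary: it contains no point closed under a suitable `f`. Since no `β` lies below
the least element of `ι`, null sets do not contain it. -/
def Null (N : Set ι) : Prop := ∃ f : ι → ι, ∀ α ∈ N, ∃ β < α, α ≤ f β

theorem Null.mono {N N' : Set ι} (h : Null N) (hs : N' ⊆ N) : Null N' :=
  h.imp fun _ hf α hα => hf α (hs hα)

theorem null_iUnion {I : Type u} (hI : #I < #ι) (N : I → Set ι) (h : ∀ i, Null (N i)) :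
    Null (⋃ i, N i) := by
  choose f hf using h
  choose g hg using fun β => exists_bound hI (fun i => f i β)
  refine ⟨g, fun α hα => ?_⟩
  obtain ⟨i, hi⟩ := mem_iUnion.1 hα
  obtain ⟨β, hβ, h⟩ := hf i α hi
  exact ⟨β, hβ, h.trans (hg β i).le⟩

theorem null_union {N N' : Set ι} (h : Null N) (h' : Null N') : Null (N ∪ N') := by
  obtain ⟨f, hf⟩ := h
  obtain ⟨g, hg⟩ := h'
  refine ⟨fun β => max (f β) (g β), fun α hα => ?_⟩
  rcases hα with hα | hα
  · obtain ⟨β, hβ, h⟩ := hf α hα; exact ⟨β, hβ, le_max_of_le_left h⟩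
  · obtain ⟨β, hβ, h⟩ := hg α hα; exact ⟨β, hβ, le_max_of_le_right h⟩

/-- Diagonal unions of null sets are null. -/
theorem null_diag (N : ι → Set ι) (h : ∀ i, Null (N i)) : Null {α | ∃ β < α, α ∈ N β} := by
  choose f hf using h
  have hc : ∀ γ : ι, #(Iic γ × Iic γ) < #ι := fun γ => by
    rw [mk_prod, Cardinal.lift_id]
    exact mul_lt_of_lt (RegIdx.unc (ι := ι)).le (mk_Iic_lt γ) (mk_Iic_lt γ)
  choose g hg using fun γ => exists_bound (hc γ) (fun p => f p.1 p.2)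
  refine ⟨g, fun α hα => ?_⟩
  obtain ⟨β, hβ, hN⟩ := hα
  obtain ⟨δ, hδ, hle⟩ := hf β α hN
  exact ⟨max β δ, max_lt hβ hδ,
    hle.trans (hg (max β δ) (⟨β, le_max_left _ _⟩, ⟨δ, le_max_right _ _⟩)).le⟩

theorem null_of_small {N : Set ι} (hN : #N < #ι) {β : ι} (hb : ∀ α ∈ N, β < α) : Null N := by
  obtain ⟨i, hi⟩ := exists_bound hN (fun x => (x : ι))
  exact ⟨fun _ => i, fun α hα => ⟨β, hb α hα, (hi ⟨α, hα⟩).le⟩⟩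

theorem exists_mem_sdiff {S N : Set ι} (hS : ¬ Null S) (hN : Null N) : ∃ α ∈ S, α ∉ N := by
  by_contra! h
  exact hS (hN.mono h)

/-- The points closed under `f`; the least element of `ι` is one of them. -/
def closedPts (f : ι → ι) : Set ι := {α | ∀ β < α, f β < α}

theorem exists_closedPt_gt (f : ι → ι) (β : ι) : ∃ c ∈ closedPts f, β < c := by
  have hc : ∀ γ : ι, ∃ h, γ < h ∧ ∀ δ ≤ γ, f δ < h := fun γ => by
    obtain ⟨i, hi⟩ := exists_bound (mk_Iic_lt γ) (fun p => max (f p) p)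
    exact ⟨i, (le_max_right _ _).trans_lt (hi ⟨γ, le_rfl⟩),
      fun δ hδ => (le_max_left _ _).trans_lt (hi ⟨δ, hδ⟩)⟩
  choose h h1 h2 using hc
  let s : ℕ → ι := fun n => h^[n] β
  obtain ⟨c, hc, hmin⟩ := WellFounded.has_min (wellFounded_lt (α := ι)) {c | ∀ n, s n < c}
    (exists_bound_nat s)
  refine ⟨c, fun δ hδ => ?_, hc 0⟩
  have : ∃ n, δ ≤ s n := by
    by_contra! hn
    exact hmin δ hn hδ
  obtain ⟨n, hn⟩ := this
  refine (h2 (s n) δ hn).trans ?_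
  have := hc (n + 1)
  simpa only [s, Function.iterate_succ', Function.comp_apply] using this

/-- The successor function of the set of closed points. -/
theorem exists_nxt (f : ι → ι) : ∃ nxt : ι → ι, ∀ c, nxt c ∈ closedPts f ∧ c < nxt c ∧
    ∀ d ∈ closedPts f, c < d → nxt c ≤ d := by
  choose nxt h using fun c => WellFounded.has_min (wellFounded_lt (α := ι))
    {d | d ∈ closedPts f ∧ c < d} (exists_closedPt_gt f c)
  exact ⟨nxt, fun c => ⟨(h c).1.1, (h c).1.2, fun d hd hcd => not_lt.1 ((h c).2 d ⟨hd, hcd⟩)⟩⟩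

/-- Below each `β` there is a largest closed point. The least element of `ι` is vacuously closed,
and suprema of closed points are closed. -/
theorem exists_floor (f : ι → ι) (β : ι) : ∃ c ∈ closedPts f, c ≤ β ∧
    ∀ d ∈ closedPts f, d ≤ β → d ≤ c := by
  obtain ⟨c, hc, hmin⟩ := WellFounded.has_min (wellFounded_lt (α := ι))
    {u | ∀ d ∈ closedPts f, d ≤ β → d ≤ u} ⟨β, fun _ _ h => h⟩
  refine ⟨c, fun δ hδ => ?_, not_lt.1 (hmin β fun _ _ h => h), hc⟩
  have : ∃ d ∈ closedPts f, d ≤ β ∧ δ < d := by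
    by_contra! h
    exact hmin δ h hδ
  obtain ⟨d, hd, hdβ, hδd⟩ := this
  exact (hd δ hδd).trans_le (hc d hd hdβ)

/-- Greedy selection: at most `#ι` objects with small supports can be chosen with disjoint supports
if each of them can be chosen so as to avoid any given small set. -/
theorem greedy {T Y : Type u} {O : Type*} (hT : #T ≤ #ι) (good : T → O → Prop) (supp : O → Set Y)
    (hs : ∀ t o, good t o → #(supp o) < #ι)
    (h : ∀ t (V : Set Y), #V < #ι → ∃ o, good t o ∧ Disjoint (supp o) V) :
    ∃ sel : T → O, (∀ t, good t (sel t)) ∧ ∀ t t', t ≠ t' → Disjoint (supp (sel t)) (supp (sel t')) := by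
  classical
  obtain ⟨e⟩ : Nonempty (T ↪ ι) := hT
  have h' : ∀ t (V : Set Y), ∃ o, good t o ∧ (#V < #ι → Disjoint (supp o) V) := by
    intro t V
    by_cases hV : #V < #ι
    · obtain ⟨o, h1, h2⟩ := h t V hV; exact ⟨o, h1, fun _ => h2⟩
    · obtain ⟨o, h1, -⟩ := h t ∅ (by
        rw [Cardinal.mk_eq_zero]; exact pos_of_gt (RegIdx.unc (ι := ι)))
      exact ⟨o, h1, fun h => absurd h hV⟩
  choose pick hp1 hp2 using h'
  let r : T → T → Prop := fun t t' => e t < e t'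
  have wf : WellFounded r := InvImage.wf e (wellFounded_lt (α := ι))
  let sel : T → O := wf.fix fun t ih => pick t (⋃ s : {s // r s t}, supp (ih s.1 s.2))
  have hsel : ∀ t, sel t = pick t (⋃ s : {s // r s t}, supp (sel s.1)) := fun t => wf.fix_eq _ t
  have hg : ∀ t, good t (sel t) := fun t => by rw [hsel]; exact hp1 _ _
  have hlt : ∀ s t, r s t → Disjoint (supp (sel t)) (supp (sel s)) := by
    intro s t hst
    have hc : #(⋃ s : {s // r s t}, supp (sel s.1)) < #ι := by
      apply mk_iUnion_lt
      · refine lt_of_le_of_lt ?_ (RegIdx.Iio_lt (e t))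
        exact ⟨⟨fun s => ⟨e s.1, s.2⟩, fun a b hab => Subtype.ext (e.injective (congrArg Subtype.val hab))⟩⟩
      · exact fun s => hs _ _ (hg _)
    have := hp2 t _ hc
    rw [← hsel] at this
    exact this.mono_right (subset_iUnion (fun s : {s // r s t} => supp (sel s.1)) ⟨s, hst⟩)
  refine ⟨sel, hg, fun t t' hne => ?_⟩
  rcases lt_trichotomy (e t) (e t') with h | h | h
  · exact (hlt t t' h).symm
  · exact absurd (e.injective h) hne
  · exact hlt t' t h

end KonigInf

/-! ### Stationarily many leftovers yield a hindrance -/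

namespace KonigInf
universe u
open Cardinal Set
set_option linter.unusedSectionVars false

variable {M W : Type u} {ι : Type u} [LinearOrder ι] [WellFoundedLT ι] [RegIdx ι]

theorem RPath.mono {E : M → W → Prop} {j : W → M} {blk blk' : Set W} {x : M} {l : List W}
    (h : RPath E j blk x l) (hb : blk' ⊆ blk) : RPath E j blk' x l := by
  induction h with
  | single he => exact .single he
  | cons _ hy he ih => exact .cons ih (fun h => hy (hb h)) he

theorem Reach.exists_src {E : M → W → Prop} {j : W → M} {blk : Set W} {src : Set M} {w : W}
    (h : Reach E j blk src w) : ∃ m ∈ src, Reach E j blk {m} w := by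
  induction h with
  | base hm he => exact ⟨_, hm, .base rfl he⟩
  | step _ hy he ih =>
    obtain ⟨m, hm, h⟩ := ih
    exact ⟨m, hm, .step h hy he⟩

theorem Reach.trans {E : M → W → Prop} {j : W → M} {blk : Set W} {src : Set M} {w z : W}
    (h : Reach E j blk src w) (hw : w ∉ blk) (h' : Reach E j blk {j w} z) :
    Reach E j blk src z := by
  induction h' with
  | base hm he => rw [mem_singleton_iff.1 hm] at he; exact .step h hw he
  | step _ hy he ih => exact .step ih hy he

/-- `y` is unblocked and some alternating walk leaving `y` by `j y` reaches `z`. -/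
def LeadsTo (E : M → W → Prop) (j : W → M) (blk : Set W) (y z : W) : Prop :=
  y ∉ blk ∧ Reach E j blk {j y} z

/-- When only walks to `z` matter, blocking `V` is no stronger than blocking those women of `V` from
which `z` can be reached. -/
theorem reach_shrink {E : M → W → Prop} {j : W → M} {BB Z V : Set W} {src : Set M} {z y : W}
    (hBZ : BB ⊆ Z) (h : Reach E j (Z ∪ {v ∈ V | LeadsTo E j BB v z}) src y)
    (hy : y = z ∨ LeadsTo E j BB y z) : Reach E j (Z ∪ V) src y := by
  induction h with
  | base hm he => exact .base hm he
  | @step y w _ hyb he ih =>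
    have hyZ : y ∉ Z := fun h => hyb (Or.inl h)
    have hyz : LeadsTo E j BB y z := by
      refine ⟨fun h => hyZ (hBZ h), ?_⟩
      rcases hy with rfl | h
      · exact .base rfl he
      · exact Reach.trans (.base rfl he) h.1 h.2
    refine .step (ih (Or.inr hyz)) ?_ he
    rintro (h | h)
    · exact hyZ h
    · exact hyb (Or.inr ⟨h, hyz⟩)

/-- Descendants of `B` under the set-valued partial function given by the set of pairs `𝒢`. -/
inductive Desc (B : Set W) (𝒢 : Set (W × Set W)) : W → Prop
  | base {w : W} : w ∈ B → Desc B 𝒢 w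
  | step {z v : W} {V : Set W} : Desc B 𝒢 z → (z, V) ∈ 𝒢 → v ∈ V → Desc B 𝒢 v

theorem Desc.mono {B : Set W} {𝒢 𝒢' : Set (W × Set W)} (h : 𝒢 ⊆ 𝒢') {w : W} (hw : Desc B 𝒢 w) :
    Desc B 𝒢' w := by
  induction hw with
  | base hb => exact .base hb
  | step _ hz hv ih => exact .step ih (h hz) hv

theorem exists_small_closed (B : Set W) (hB : #B < #ι) (K : W → Set W) (hK : ∀ w, #(K w) < #ι) :
    ∃ T : Set W, B ⊆ T ∧ (∀ w ∈ T, K w ⊆ T) ∧ #T < #ι := by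
  let s : ℕ → Set W := fun n => (fun S : Set W => S ∪ ⋃ w : S, K w)^[n] B
  have hs : ∀ n, s (n + 1) = s n ∪ ⋃ w : s n, K w := fun n => by
    simp only [s, Function.iterate_succ', Function.comp_apply]
  have hc : ∀ n, #(s n) < #ι := by
    intro n
    induction n with
    | zero => exact hB
    | succ n ih =>
      rw [hs]
      exact mk_union_lt ih (mk_iUnion_lt ih _ fun w => hK w)
  refine ⟨⋃ n, s n, subset_iUnion s 0, fun w hw => ?_, mk_iUnion_nat_lt s hc⟩
  obtain ⟨n, hn⟩ := mem_iUnion.1 hw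
  refine subset_trans ?_ (subset_iUnion s (n + 1))
  rw [hs]
  exact subset_union_of_subset_right (subset_iUnion (fun w : s n => K w) ⟨w, hn⟩) _

theorem mk_desc_lt {B : Set W} (hB : #B < #ι) {𝒢 : Set (W × Set W)}
    (hf : ∀ z V V', (z, V) ∈ 𝒢 → (z, V') ∈ 𝒢 → V = V') (hV : ∀ z V, (z, V) ∈ 𝒢 → #V < #ι) :
    #{w | Desc B 𝒢 w} < #ι := by
  have hK : ∀ z, #({v | ∃ V, (z, V) ∈ 𝒢 ∧ v ∈ V} : Set W) < #ι := by
    intro z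
    by_cases h : ∃ V, (z, V) ∈ 𝒢
    · obtain ⟨V, h⟩ := h
      refine lt_of_le_of_lt (mk_le_mk_of_subset ?_) (hV z V h)
      rintro v ⟨V', h', hv⟩
      rwa [hf z V V' h h']
    · refine lt_of_le_of_lt (mk_le_mk_of_subset (t := ∅) ?_) ?_
      · rintro v ⟨V', h', hv⟩
        exact absurd ⟨V', h'⟩ h
      · rw [Cardinal.mk_eq_zero]; exact pos_of_gt (RegIdx.unc (ι := ι))
  obtain ⟨T, h1, h2, h3⟩ := exists_small_closed B hB _ hK
  refine lt_of_le_of_lt (mk_le_mk_of_subset fun w hw => ?_) h3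
  induction hw with
  | base hb => exact h1 hb
  | step _ hz hv ih => exact h2 _ ih ⟨_, hz, hv⟩

/-- `z` is popular: it stays reachable after blocking any small set and
discarding any null set of sources. -/
def Popular (E : M → W → Prop) (j : W → M) (x : ι → M) (S : Set ι) (Z : Set W) (z : W) : Prop :=
  ∀ V : Set W, #V < #ι → z ∉ V → ∀ N : Set ι, Null N → Reach E j (Z ∪ V) (x '' (S \ N)) z

/-- The blocks `B β` can be enlarged to small sets `Zs β`, adding only women from which the old block
can be reached, so that each woman in the union `Z` is either popular or unreachable from almost all
sources. An unpopular `z` has a small separating set `V`; a maximal assignment `z ↦ V` is obtained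
from Zorn's lemma, and `Zs β` consists of the descendants of `B β` under it. -/
theorem exists_frontier (E : M → W → Prop) (j : W → M) (x : ι → M) (S : Set ι) (B : ι → Set W)
    (hB : ∀ β, #(B β) < #ι) :
    ∃ Zs : ι → Set W, (∀ β, B β ⊆ Zs β) ∧ (∀ β, #(Zs β) < #ι) ∧
      (∀ β, ∀ z ∈ Zs β, z ∈ B β ∨ ∃ b ∈ B β, LeadsTo E j (⋃ β, B β) z b) ∧
      ∀ z ∈ ⋃ β, Zs β, Popular E j x S (⋃ β, Zs β) z ∨
        ∃ N, Null N ∧ ¬ Reach E j (⋃ β, Zs β) (x '' (S \ N)) z := by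
  set BB := ⋃ β, B β with hBB
  let valid : Set (Set (W × Set W)) := {𝒢 | (∀ z V V', (z, V) ∈ 𝒢 → (z, V') ∈ 𝒢 → V = V') ∧
    ∀ z V, (z, V) ∈ 𝒢 → #V < #ι ∧ (∀ v ∈ V, LeadsTo E j BB v z) ∧
      ∃ N, Null N ∧ ¬ Reach E j ({w | Desc BB 𝒢 w} ∪ V) (x '' (S \ N)) z}
  have hDm : ∀ 𝒢 𝒢' : Set (W × Set W), 𝒢 ⊆ 𝒢' → {w | Desc BB 𝒢 w} ⊆ {w | Desc BB 𝒢' w} :=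
    fun _ _ h _ hw => Desc.mono h hw
  have hz := zorn_subset valid (fun c hc hch => ⟨⋃₀ c, ⟨?_, ?_⟩, fun s hs => subset_sUnion_of_mem hs⟩)
  rotate_left
  · rintro z V V' ⟨g, hg, h⟩ ⟨g', hg', h'⟩
    rcases hch.total hg hg' with hle | hle
    · exact (hc hg').1 z V V' (hle h) h'
    · exact (hc hg).1 z V V' h (hle h')
  · rintro z V ⟨g, hg, h⟩
    obtain ⟨h1, h2, N, hN, h3⟩ := (hc hg).2 z V h
    refine ⟨h1, h2, N, hN, fun hr => h3 (hr.mono ?_ subset_rfl)⟩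
    exact union_subset_union_left _ (hDm _ _ (subset_sUnion_of_mem hg))
  obtain ⟨𝒢, hmax⟩ := hz
  have hZ : (⋃ β, {w | Desc (B β) 𝒢 w}) = {w | Desc BB 𝒢 w} := by
    ext w
    simp only [mem_iUnion]
    constructor
    · rintro ⟨β, hw⟩
      induction hw with
      | base hb => exact .base (mem_iUnion.2 ⟨β, hb⟩)
      | step _ h1 h2 ih => exact Desc.step ih h1 h2
    · intro hw
      induction hw with
      | base hb => obtain ⟨β, hb⟩ := mem_iUnion.1 hb; exact ⟨β, .base hb⟩
      | step _ h1 h2 ih => obtain ⟨β, ih⟩ := ih; exact ⟨β, Desc.step ih h1 h2⟩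
  refine ⟨fun β => {w | Desc (B β) 𝒢 w}, fun β w hw => .base hw,
    fun β => mk_desc_lt (hB β) hmax.prop.1 fun z V h => (hmax.prop.2 z V h).1, ?_, ?_⟩
  · intro β z hz
    induction hz with
    | base hb => exact Or.inl hb
    | @step z v V _ h1 h2 ih =>
      right
      have hv := (hmax.prop.2 z V h1).2.1 v h2
      rcases ih with h | ⟨b, hb, h⟩
      · exact ⟨z, h, hv⟩
      · exact ⟨b, hb, hv.1, hv.2.trans h.1 h.2⟩
  · rw [hZ]
    intro z hz
    by_cases hdom : ∃ V, (z, V) ∈ 𝒢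
    · right
      obtain ⟨V, hV⟩ := hdom
      obtain ⟨-, -, N, hN, h⟩ := hmax.prop.2 z V hV
      refine ⟨N, hN, fun hr => h (hr.mono (union_subset subset_rfl fun v hv => ?_) subset_rfl)⟩
      exact Desc.step hz hV hv
    · by_contra! hcon
      obtain ⟨hpop, -⟩ := hcon
      unfold Popular at hpop
      push Not at hpop
      obtain ⟨V, hVc, hzV, N, hN, hr⟩ := hpop
      let V' : Set W := {v ∈ V | LeadsTo E j BB v z}
      have hr' : ¬ Reach E j ({w | Desc BB 𝒢 w} ∪ V') (x '' (S \ N)) z := fun h =>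
        hr (reach_shrink (fun b hb => Desc.base hb) h (Or.inl rfl))
      have hval : insert (z, V') 𝒢 ∈ valid := by
        refine ⟨?_, ?_⟩
        · rintro a U U' (h | h) (h' | h')
          · rw [Prod.mk.injEq] at h h'; rw [h.2, h'.2]
          · rw [Prod.mk.injEq] at h; exact absurd ⟨U', h.1 ▸ h'⟩ hdom
          · rw [Prod.mk.injEq] at h'; exact absurd ⟨U, h'.1 ▸ h⟩ hdom
          · exact hmax.prop.1 a U U' h h'
        · rintro a U (h | h)
          · rw [Prod.mk.injEq] at h
            obtain ⟨rfl, rfl⟩ := h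
            refine ⟨lt_of_le_of_lt (mk_le_mk_of_subset (sep_subset _ _)) hVc, fun v hv => hv.2,
              N, hN, fun h => hr' (h.mono ?_ subset_rfl)⟩
            exact union_subset_union_left _ (hDm _ _ (subset_insert _ _))
          · obtain ⟨h1, h2, N, hN, h3⟩ := hmax.prop.2 a U h
            refine ⟨h1, h2, N, hN, fun hr => h3 (hr.mono ?_ subset_rfl)⟩
            exact union_subset_union_left _ (hDm _ _ (subset_insert _ _))
      have := hmax.le_of_ge hval (subset_insert _ _)
      exact hdom ⟨V', this (mem_insert _ _)⟩

/-- Let `j` match the women `D`, let the men `x α`, for `α` in a stationary set `S`, be left over by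
`j`, and let all neighbours of these men lie in `D` or in small blocks `B β`, where `B β` is only
reachable from later `x α`. Then there is a hindrance. Outside a null set of indices, every woman of
the frontier `Z` met by an alternating walk is popular; popular women can be covered by switching
along disjoint paths, and one man `x α₀` is spared. -/
theorem hindered_of_stationary {E : M → W → Prop} {P : Set M} {j : W → M} {D : Set W}
    {B : ι → Set W} {x : ι → M} {S : Set ι} {β₀ : ι} (hB : ∀ β, #(B β) < #ι) (hS : ¬ Null S)
    (hβ₀ : ∀ α ∈ S, β₀ < α) (hj : InjOn j D) (hjE : ∀ y ∈ D, E (j y) y) (hjP : ∀ y ∈ D, j y ∈ P)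
    (hxP : ∀ α ∈ S, x α ∈ P) (hxi : InjOn x S) (hxj : ∀ α ∈ S, ∀ y ∈ D, j y ≠ x α)
    (hnx : ∀ α ∈ S, ∀ w, E (x α) w → w ∈ D ∪ ⋃ β, B β)
    (hny : ∀ y ∈ D, ∀ w, E (j y) w → w ∈ D ∪ ⋃ β, B β)
    (hL : ∀ α ∈ S, ∀ β, ∀ b ∈ B β, Reach E j (⋃ β, B β) {x α} b → β < α) :
    Hindered E P ∅ := by
  classical
  obtain ⟨Zs, hBZ, hZc, hZL, hZp⟩ := exists_frontier E j x S B hB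
  set Z := ⋃ β, Zs β with hZdef
  have hBBZ : (⋃ β, B β) ⊆ Z := iUnion_mono hBZ
  have hlt : ∀ α ∈ S, ∀ β, ∀ z ∈ Zs β, Reach E j Z {x α} z → β < α := by
    intro α hα β z hz hr
    have hr' := hr.mono hBBZ subset_rfl
    rcases hZL β z hz with h | ⟨b, hb, h⟩
    · exact hL α hα β z h hr'
    · exact hL α hα β b hb (hr'.trans h.1 h.2)
  have hD : ∀ T ⊆ S, ∀ w, Reach E j Z (x '' T) w → w ∉ Z → w ∈ D := by
    intro T hT w hw
    induction hw with
    | base hm he =>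
      intro hwZ
      obtain ⟨α, hα, rfl⟩ := hm
      exact (hnx α (hT hα) _ he).resolve_right fun h => hwZ (hBBZ h)
    | step _ hy he ih =>
      intro hwZ
      exact (hny _ (ih hy) _ he).resolve_right fun h => hwZ (hBBZ h)
  have hnull0 : Null (∅ : Set ι) := ⟨id, by simp⟩
  have hN : ∀ z, ∃ N, Null N ∧ (z ∈ Z → ¬ Popular E j x S Z z →
      ¬ Reach E j Z (x '' (S \ N)) z) := by
    intro z
    by_cases h : z ∈ Z ∧ ¬ Popular E j x S Z z
    · obtain ⟨N, h1, h2⟩ := (hZp z h.1).resolve_left h.2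
      exact ⟨N, h1, fun _ _ => h2⟩
    · exact ⟨∅, hnull0, fun h1 h2 => absurd ⟨h1, h2⟩ h⟩
  choose N hN1 hN2 using hN
  let ND : Set ι := {α | ∃ β < α, α ∈ ⋃ z : Zs β, N z}
  have hND : Null ND := null_diag _ fun β => null_iUnion (hZc β) _ fun z => hN1 z
  have hpop : ∀ α ∈ S, α ∉ ND → ∀ z ∈ Z, Reach E j Z {x α} z → Popular E j x S Z z := by
    intro α hα hαN z hz hr
    by_contra hp
    obtain ⟨β, hβ⟩ := mem_iUnion.1 hz
    refine hN2 z hz hp (hr.mono subset_rfl ?_)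
    rintro _ rfl
    exact ⟨α, ⟨hα, fun h => hαN ⟨β, hlt α hα β z hβ hr, mem_iUnion.2 ⟨⟨z, hβ⟩, h⟩⟩⟩, rfl⟩
  obtain ⟨α₀, hα₀S, hα₀N⟩ := exists_mem_sdiff hS hND
  -- disjoint paths from distinct sources, other than `α₀`, to the popular points
  let T := {z // z ∈ Z ∧ Popular E j x S Z z}
  have hT : #T ≤ #ι := by
    have h1 : #T ≤ #Z := mk_le_mk_of_subset (s := {z | z ∈ Z ∧ Popular E j x S Z z})
      fun z hz => hz.1
    have hinf : ℵ₀ ≤ #ι := (RegIdx.unc (ι := ι)).le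
    have h2 : #Z ≤ #ι * #ι :=
      (mk_iUnion_le Zs).trans (mul_le_mul_right (ciSup_le' fun β => (hZc β).le) _)
    rw [mul_eq_self hinf] at h2
    exact h1.trans h2
  let good : T → ι × List W → Prop := fun z o => o.1 ∈ S ∧ o.1 ∉ ND ∧ o.1 ≠ α₀ ∧
    RPath E j Z (x o.1) (z.1 :: o.2) ∧ (z.1 :: o.2).Nodup ∧
    ∀ y ∈ o.2, y ∉ Z ∧ Reach E j Z {x o.1} y
  let supp : ι × List W → Set (W ⊕ ι) := fun o => {v | v = Sum.inr o.1 ∨ ∃ y ∈ o.2, v = Sum.inl y}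
  obtain ⟨sel, hsel, hdisj⟩ := greedy (ι := ι) hT good supp (by
      intro t o _
      refine lt_of_lt_of_le (lt_aleph0_iff_set_finite.2 ?_) (RegIdx.unc (ι := ι)).le
      refine ((o.2.finite_toSet.image Sum.inl).insert (Sum.inr o.1)).subset ?_
      rintro v (h | ⟨y, hy, h⟩)
      · exact Or.inl h
      · exact Or.inr ⟨y, hy, h.symm⟩) (by
      intro z V hV
      have hVW : #({w | Sum.inl w ∈ V ∧ w ≠ z.1} : Set W) < #ι := by
        refine lt_of_le_of_lt ?_ hV
        exact ⟨⟨fun w => ⟨Sum.inl w.1, w.2.1⟩, fun a b hab => Subtype.ext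
          (Sum.inl.inj (congrArg Subtype.val hab))⟩⟩
      have hVι : #({i | Sum.inr i ∈ V} : Set ι) < #ι := by
        refine lt_of_le_of_lt ?_ hV
        exact ⟨⟨fun w => ⟨Sum.inr w.1, w.2⟩, fun a b hab => Subtype.ext
          (Sum.inr.inj (congrArg Subtype.val hab))⟩⟩
      have hnull : Null (ND ∪ ({i | Sum.inr i ∈ V} ∪ {α₀}) ∩ S) := by
        refine null_union hND (null_of_small (β := β₀) ?_ fun α hα => hβ₀ α hα.2)
        refine lt_of_le_of_lt (mk_le_mk_of_subset inter_subset_left) (mk_union_lt hVι ?_)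
        rw [mk_singleton]; exact one_lt_aleph0.trans (RegIdx.unc (ι := ι))
      obtain ⟨_, ⟨α, hα, rfl⟩, l, hp, hn, hl⟩ :=
        (z.2.2 _ hVW (fun h => h.2 rfl) _ hnull).exists_path
      refine ⟨(α, l), ⟨hα.1, fun h => hα.2 (Or.inl h),
        fun h => hα.2 (Or.inr ⟨Or.inr h, hα.1⟩), hp.mono subset_union_left, hn,
        fun y hy => ⟨fun h => (hl y hy).1 (Or.inl h),
          (hl y hy).2.mono subset_union_left subset_rfl⟩⟩, ?_⟩
      rw [disjoint_left]
      rintro v (rfl | ⟨y, hy, rfl⟩) hv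
      · exact hα.2 (Or.inr ⟨Or.inl hv, hα.1⟩)
      · exact (hl y hy).1 (Or.inr ⟨hv, by rintro rfl; exact (List.nodup_cons.1 hn).1 hy⟩))
  have htail : ∀ t, ∀ y ∈ (sel t).2, y ∈ D := fun t y hy =>
    hD {(sel t).1} (singleton_subset_iff.2 (hsel t).1) y
      (by rw [image_singleton]; exact ((hsel t).2.2.2.2.2 y hy).2) ((hsel t).2.2.2.2.2 y hy).1
  obtain ⟨J, hJ1, hJ2, hJ3⟩ := exists_switch (D := D) (fun t => x (sel t).1)
    (fun t => t.1 :: (sel t).2) (fun t => (hsel t).2.2.2.1) (fun t => (hsel t).2.2.2.2.1) (by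
      intro t t' w hw hw'
      rcases List.mem_cons.1 hw with h | h <;> rcases List.mem_cons.1 hw' with h' | h'
      · exact Subtype.ext (h.symm.trans h')
      · exact absurd (h ▸ t.2.1) ((hsel t').2.2.2.2.2 w h').1
      · exact absurd (h' ▸ t'.2.1) ((hsel t).2.2.2.2.2 w h).1
      · by_contra hne
        exact disjoint_left.1 (hdisj t t' hne) (Or.inr ⟨w, h, rfl⟩) (Or.inr ⟨w, h', rfl⟩)) (by
      intro t t' htt
      by_contra hne
      have := hxi (hsel t).1 (hsel t').1 htt
      exact disjoint_left.1 (hdisj t t' hne) (Or.inl rfl) (Or.inl (by rw [this])))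
    hj (fun t => hxj _ (hsel t).1) htail
  let G := S \ ND
  let Rc : W → Prop := Reach E j Z (x '' G)
  let Y : Set M := {m | (∃ α ∈ G, x α = m) ∨ ∃ y, y ∉ Z ∧ Rc y ∧ j y = m}
  have hGS : G ⊆ S := sdiff_subset
  have hnb : ∀ w ∈ nbr E ∅ Y, Rc w := by
    rintro w ⟨-, m, ⟨α, hα, rfl⟩ | ⟨y, hy, hr, rfl⟩, he⟩
    · exact .base ⟨α, hα, rfl⟩ he
    · exact .step hr hy he
  have hcase : ∀ w, Rc w → (w ∈ D ∧ w ∉ Z) ∨ ∃ t, w ∈ t.1 :: (sel t).2 := by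
    intro w hw
    by_cases hwZ : w ∈ Z
    · right
      obtain ⟨_, ⟨α, hα, rfl⟩, hr⟩ := Reach.exists_src hw
      exact ⟨⟨w, hwZ, hpop α hα.1 hα.2 w hwZ hr⟩, List.mem_cons_self⟩
    · exact Or.inl ⟨hD G hGS w hw hwZ, hwZ⟩
  refine ⟨Y, ?_, J, ⟨fun w hw => ?_, fun w hw => ?_, hJ3.mono fun w hw => ?_⟩, x α₀,
    Or.inl ⟨α₀, ⟨hα₀S, hα₀N⟩, rfl⟩, fun w hw => ?_⟩
  · rintro m (⟨α, hα, rfl⟩ | ⟨y, hy, hr, rfl⟩)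
    · exact hxP α hα.1
    · exact hjP y (hD G hGS y hr hy)
  · by_cases ht : ∃ t : T, w ∈ t.1 :: (sel t).2
    · obtain ⟨t, ht⟩ := ht
      rcases (hJ2 t w ht).2 with h | ⟨y, hy, h⟩
      · exact Or.inl ⟨_, ⟨(hsel t).1, (hsel t).2.1⟩, h.symm⟩
      · refine Or.inr ⟨y, ((hsel t).2.2.2.2.2 y hy).1,
          ((hsel t).2.2.2.2.2 y hy).2.mono subset_rfl ?_, h.symm⟩
        rintro _ rfl
        exact ⟨_, ⟨(hsel t).1, (hsel t).2.1⟩, rfl⟩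
    · push Not at ht
      rw [hJ1 w ht]
      rcases hcase w (hnb w hw) with h | ⟨t, h⟩
      · exact Or.inr ⟨w, h.2, hnb w hw, rfl⟩
      · exact absurd h (ht t)
  · by_cases ht : ∃ t : T, w ∈ t.1 :: (sel t).2
    · obtain ⟨t, ht⟩ := ht
      exact (hJ2 t w ht).1
    · push Not at ht
      rw [hJ1 w ht]
      rcases hcase w (hnb w hw) with h | ⟨t, h⟩
      · exact hjE w h.1
      · exact absurd h (ht t)
  · exact (hcase w (hnb w hw)).imp (fun h => h.1) id
  · by_cases ht : ∃ t : T, w ∈ t.1 :: (sel t).2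
    · obtain ⟨t, ht⟩ := ht
      rcases (hJ2 t w ht).2 with h | ⟨y, hy, h⟩
      · rw [h]
        exact fun he => (hsel t).2.2.1 (hxi (hsel t).1 hα₀S he)
      · rw [h]
        exact hxj α₀ hα₀S y (htail t y hy)
    · push Not at ht
      rw [hJ1 w ht]
      rcases hcase w (hnb w hw) with h | ⟨t, h⟩
      · exact hxj α₀ hα₀S w h.1
      · exact absurd h (ht t)

end KonigInf

/-! ### Ladders -/

namespace KonigInf
universe u
open Cardinal Set
set_option linter.unusedSectionVars false

variable {M W : Type u} {ι : Type u} [LinearOrder ι] [WellFoundedLT ι] [RegIdx ι]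

/-- The men taken by the ladder before stage `β`. -/
def lA (d : ι → Set M × Set W) (β : ι) : Set M := {m | ∃ γ < β, m ∈ (d γ).1}
/-- The women taken by the ladder before stage `β`. -/
def lR (d : ι → Set M × Set W) (β : ι) : Set W := {w | ∃ γ < β, w ∈ (d γ).2}

open Classical in
/-- The part of the ladder before stage `β`, used to make `Φ` depend on the past only. -/
noncomputable def trunc (d : ι → Set M × Set W) (β : ι) : ι → Set M × Set W :=
  fun γ => if γ < β then d γ else (∅, ∅)

theorem lA_mono (d : ι → Set M × Set W) {β γ : ι} (h : β ≤ γ) : lA d β ⊆ lA d γ :=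
  fun _ ⟨δ, h1, h2⟩ => ⟨δ, h1.trans_le h, h2⟩
theorem lR_mono (d : ι → Set M × Set W) {β γ : ι} (h : β ≤ γ) : lR d β ⊆ lR d γ :=
  fun _ ⟨δ, h1, h2⟩ => ⟨δ, h1.trans_le h, h2⟩

theorem lA_trunc (d : ι → Set M × Set W) {β γ : ι} (h : γ ≤ β) : lA (trunc d β) γ = lA d γ := by
  ext m
  refine exists_congr fun δ => and_congr_right fun hδ => ?_
  simp [trunc, hδ.trans_le h]
theorem lR_trunc (d : ι → Set M × Set W) {β γ : ι} (h : γ ≤ β) : lR (trunc d β) γ = lR d γ := by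
  ext m
  refine exists_congr fun δ => and_congr_right fun hδ => ?_
  simp [trunc, hδ.trans_le h]

/-- A one-leftover hindrance with leftover `x`. -/
structure IsHind1 (E : M → W → Prop) (P : Set M) (R : Set W) (X : Set M) (j : W → M) (x : M) :
    Prop where
  sub : X ⊆ P
  wave : IsWave E R X j
  mem : x ∈ X
  left : ∀ w ∈ nbr E R X, j w ≠ x
  cov : ∀ m ∈ X, m ≠ x → ∃ w ∈ nbr E R X, j w = m

/-- A transfinite construction in which `d β` is the pair of sets of men and of women taken at
stage `β`. If what remains is hindered, a one-leftover hindrance is taken together with its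
neighbourhood; otherwise no man and the women chosen by `Φ` from the past of the ladder are taken. -/
structure IsLadder (E : M → W → Prop) (P : Set M) (Φ : ι → (ι → Set M × Set W) → Set W)
    (d : ι → Set M × Set W) : Prop where
  hind : ∀ β, Hindered E (P \ lA d β) (lR d β) → (d β).2 = nbr E (lR d β) (d β).1 ∧
    ∃ j x, IsHind1 E (P \ lA d β) (lR d β) (d β).1 j x
  unh : ∀ β, ¬ Hindered E (P \ lA d β) (lR d β) → d β = (∅, Φ β (trunc d β) \ lR d β)

theorem exists_ladder (E : M → W → Prop) (P : Set M) (Φ : ι → (ι → Set M × Set W) → Set W) :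
    ∃ d, IsLadder E P Φ d := by
  classical
  have hstep : ∀ β (d' : ι → Set M × Set W), ∃ o : Set M × Set W,
      (Hindered E (P \ lA d' β) (lR d' β) → o.2 = nbr E (lR d' β) o.1 ∧
        ∃ j x, IsHind1 E (P \ lA d' β) (lR d' β) o.1 j x) ∧
      (¬ Hindered E (P \ lA d' β) (lR d' β) → o = (∅, Φ β d' \ lR d' β)) := by
    intro β d'
    by_cases h : Hindered E (P \ lA d' β) (lR d' β)
    · obtain ⟨X, h1, j, h2, x, h3, h4, h5⟩ := h.one_leftover
      exact ⟨(X, nbr E (lR d' β) X), fun _ => ⟨rfl, j, x, h1, h2, h3, h4, h5⟩, fun h' => absurd h h'⟩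
    · exact ⟨(∅, Φ β d' \ lR d' β), fun h' => absurd h' h, fun _ => rfl⟩
  choose step h1 h2 using hstep
  let d : ι → Set M × Set W := (wellFounded_lt (α := ι)).fix fun β ih =>
    step β fun γ => if h : γ < β then ih γ h else (∅, ∅)
  have hd : ∀ β, d β = step β (trunc d β) := fun β => by
    have := (wellFounded_lt (α := ι)).fix_eq
      (fun β (ih : (γ : ι) → γ < β → Set M × Set W) =>
        step β fun γ => if h : γ < β then ih γ h else (∅, ∅)) β
    refine this.trans (congrArg (step β) (funext fun γ => ?_))
    by_cases h : γ < β
    · simp only [h, dite_true, trunc, if_true]; rfl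
    · simp only [h, dite_false, trunc, if_false]
  refine ⟨d, fun β h => ?_, fun β h => ?_⟩
  · have := h1 β (trunc d β)
    rw [lA_trunc d le_rfl, lR_trunc d le_rfl, ← hd] at this
    exact this h
  · have := h2 β (trunc d β)
    rw [lA_trunc d le_rfl, lR_trunc d le_rfl, ← hd] at this
    exact this h

namespace IsLadder

variable {E : M → W → Prop} {P : Set M} {Φ : ι → (ι → Set M × Set W) → Set W}
  {d : ι → Set M × Set W}

theorem hind_of_mem (h : IsLadder E P Φ d) {β : ι} {m : M} (hm : m ∈ (d β).1) :
    Hindered E (P \ lA d β) (lR d β) := by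
  by_contra hc
  rw [h.unh β hc] at hm
  exact hm

theorem fst_sub (h : IsLadder E P Φ d) (β : ι) : (d β).1 ⊆ P \ lA d β := by
  intro m hm
  obtain ⟨-, j, x, hx⟩ := h.hind β (h.hind_of_mem hm)
  exact hx.sub hm

theorem snd_notMem (h : IsLadder E P Φ d) {β : ι} {w : W} (hw : w ∈ (d β).2) : w ∉ lR d β := by
  by_cases hc : Hindered E (P \ lA d β) (lR d β)
  · rw [(h.hind β hc).1] at hw; exact hw.1
  · rw [h.unh β hc] at hw; exact hw.2

theorem fst_eq (h : IsLadder E P Φ d) {β γ : ι} {m : M} (hβ : m ∈ (d β).1) (hγ : m ∈ (d γ).1) :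
    β = γ := by
  rcases lt_trichotomy β γ with hl | hl | hl
  · exact absurd ⟨β, hl, hβ⟩ (h.fst_sub γ hγ).2
  · exact hl
  · exact absurd ⟨γ, hl, hγ⟩ (h.fst_sub β hβ).2

theorem snd_eq (h : IsLadder E P Φ d) {β γ : ι} {w : W} (hβ : w ∈ (d β).2) (hγ : w ∈ (d γ).2) :
    β = γ := by
  rcases lt_trichotomy β γ with hl | hl | hl
  · exact absurd ⟨β, hl, hβ⟩ (h.snd_notMem hγ)
  · exact hl
  · exact absurd ⟨γ, hl, hγ⟩ (h.snd_notMem hβ)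

theorem nbr_stage (h : IsLadder E P Φ d) {β : ι} {m : M} (hm : m ∈ (d β).1) {w : W} (he : E m w) :
    ∃ γ ≤ β, w ∈ (d γ).2 := by
  by_cases hw : w ∈ lR d β
  · obtain ⟨γ, h1, h2⟩ := hw; exact ⟨γ, h1.le, h2⟩
  · refine ⟨β, le_rfl, ?_⟩
    rw [(h.hind β (h.hind_of_mem hm)).1]
    exact ⟨hw, m, hm, he⟩

theorem nbr_lA (h : IsLadder E P Φ d) {β : ι} {m : M} (hm : m ∈ lA d β) {w : W} (he : E m w) :
    w ∈ lR d β := by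
  obtain ⟨γ, h1, h2⟩ := hm
  obtain ⟨δ, h3, h4⟩ := h.nbr_stage h2 he
  exact ⟨δ, h3.trans_lt h1, h4⟩

theorem lA_sub (h : IsLadder E P Φ d) (β : ι) : lA d β ⊆ P :=
  fun _ ⟨γ, _, hm⟩ => (h.fst_sub γ hm).1

/-- The hindered stages of a ladder with small choices `Φ` in an unhindered graph form a null set:
otherwise the leftovers of these stages would give a hindrance by `hindered_of_stationary`. -/
theorem null_hind (h : IsLadder E P Φ d) (hU : ¬ Hindered E P ∅)
    (hΦ : ∀ β, #(Φ β (trunc d β)) < #ι) :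
    Null {β | Hindered E (P \ lA d β) (lR d β)} := by
  classical
  by_contra hS
  set H := {β | Hindered E (P \ lA d β) (lR d β)} with hH
  have hne : Nonempty M := by
    by_contra hM
    refine hS ⟨id, fun α hα => ?_⟩
    obtain ⟨_, _, _, _, x, _⟩ := hα
    exact absurd ⟨x⟩ hM
  have hch : ∀ β, ∃ (j : W → M) (x : M), β ∈ H → IsHind1 E (P \ lA d β) (lR d β) (d β).1 j x := by
    intro β
    by_cases hβ : β ∈ H
    · obtain ⟨-, j, x, hx⟩ := h.hind β hβ; exact ⟨j, x, fun _ => hx⟩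
    · exact ⟨fun _ => hne.some, hne.some, fun h => absurd h hβ⟩
  choose jj x hx using hch
  let D : Set W := {w | ∃ β ∈ H, w ∈ (d β).2}
  let B : ι → Set W := fun β => {w | β ∉ H ∧ w ∈ (d β).2}
  let j : W → M := fun w => if hw : w ∈ D then jj hw.choose w else hne.some
  have hj : ∀ β ∈ H, ∀ w ∈ (d β).2, j w = jj β w := by
    intro β hβ w hw
    have hD : w ∈ D := ⟨β, hβ, hw⟩
    have : hD.choose = β := h.snd_eq hD.choose_spec.2 hw
    change dite _ _ _ = _
    rw [dif_pos hD, this]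
  have hnb : ∀ β ∈ H, ∀ w ∈ (d β).2, w ∈ nbr E (lR d β) (d β).1 := fun β hβ w hw => by
    rwa [← (h.hind β hβ).1]
  have hjm : ∀ β ∈ H, ∀ w ∈ (d β).2, j w ∈ (d β).1 := fun β hβ w hw => by
    rw [hj β hβ w hw]; exact (hx β hβ).wave.mem w (hnb β hβ w hw)
  have hDB : ∀ β w, w ∈ (d β).2 → w ∈ D ∪ ⋃ β, B β := by
    intro β w hw
    by_cases hβ : β ∈ H
    · exact Or.inl ⟨β, hβ, hw⟩
    · exact Or.inr (mem_iUnion.2 ⟨β, hβ, hw⟩)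
  obtain ⟨β₀, -, hβ₀⟩ := WellFounded.has_min (wellFounded_lt (α := ι)) Set.univ
    (let ⟨α, _⟩ := exists_mem_sdiff hS (N := ∅) ⟨id, by simp⟩; ⟨α, trivial⟩)
  have hA0 : lA d β₀ = ∅ := by
    ext m; exact ⟨fun ⟨γ, hγ, _⟩ => absurd hγ (hβ₀ γ trivial), fun h => absurd h (notMem_empty m)⟩
  have hR0 : lR d β₀ = ∅ := by
    ext m; exact ⟨fun ⟨γ, hγ, _⟩ => absurd hγ (hβ₀ γ trivial), fun h => absurd h (notMem_empty m)⟩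
  refine hU (hindered_of_stationary (j := j) (D := D) (B := B) (x := x) (S := H) (β₀ := β₀)
    ?_ hS ?_ ?_ ?_ ?_ ?_ ?_ ?_ ?_ ?_ ?_)
  · intro β
    by_cases hβ : β ∈ H
    · refine lt_of_le_of_lt (mk_le_mk_of_subset (t := ∅) fun w hw => hw.1 hβ) ?_
      rw [Cardinal.mk_eq_zero]; exact pos_of_gt (RegIdx.unc (ι := ι))
    · refine lt_of_le_of_lt (mk_le_mk_of_subset fun w hw => ?_) (hΦ β)
      have := hw.2
      rw [h.unh β hβ] at this
      exact this.1
  · intro α hα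
    refine lt_of_le_of_ne (not_lt.1 (hβ₀ α trivial)) ?_
    rintro rfl
    have : Hindered E (P \ lA d β₀) (lR d β₀) := hα
    rw [hA0, hR0, sdiff_empty] at this
    exact hU this
  · rintro w ⟨β, hβ, hw⟩ w' ⟨γ, hγ, hw'⟩ he
    have : β = γ := h.fst_eq (hjm β hβ w hw) (he ▸ hjm γ hγ w' hw')
    subst this
    rw [hj β hβ w hw, hj β hβ w' hw'] at he
    exact (hx β hβ).wave.inj (hnb β hβ w hw) (hnb β hβ w' hw') he
  · rintro w ⟨β, hβ, hw⟩
    rw [hj β hβ w hw]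
    exact (hx β hβ).wave.adj w (hnb β hβ w hw)
  · rintro w ⟨β, hβ, hw⟩
    exact (h.fst_sub β (hjm β hβ w hw)).1
  · exact fun α hα => (h.fst_sub α (hx α hα).mem).1
  · intro α hα α' hα' he
    exact h.fst_eq (hx α hα).mem (he ▸ (hx α' hα').mem)
  · rintro α hα w ⟨β, hβ, hw⟩ he
    have : β = α := h.fst_eq (hjm β hβ w hw) (he ▸ (hx α hα).mem)
    subst this
    rw [hj β hβ w hw] at he
    exact (hx β hβ).left w (hnb β hβ w hw) he
  · intro α hα w he
    obtain ⟨γ, -, hγ⟩ := h.nbr_stage (hx α hα).mem he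
    exact hDB γ w hγ
  · rintro y ⟨β, hβ, hy⟩ w he
    obtain ⟨γ, -, hγ⟩ := h.nbr_stage (hjm β hβ y hy) he
    exact hDB γ w hγ
  · intro α hα β b hb hr
    have key : ∀ w, Reach E j (⋃ β, B β) {x α} w → ∃ γ ≤ α, w ∈ (d γ).2 := by
      intro w hw
      induction hw with
      | base hm he =>
        rw [mem_singleton_iff.1 hm] at he
        exact h.nbr_stage (hx α hα).mem he
      | @step y w _ hy he ih =>
        obtain ⟨γ, hγ, hyγ⟩ := ih
        have hγH : γ ∈ H := by
          by_contra hc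
          exact hy (mem_iUnion.2 ⟨γ, hc, hyγ⟩)
        obtain ⟨δ, h1, h2⟩ := h.nbr_stage (hjm γ hγH y hyγ) he
        exact ⟨δ, h1.trans hγ, h2⟩
    obtain ⟨γ, hγ, hbγ⟩ := key b hr
    have := h.snd_eq hb.2 hbγ
    subst this
    exact lt_of_le_of_ne hγ (by rintro rfl; exact hb.1 hα)

/-- All men of the ladder but one per stage are matched inside the ladder. -/
theorem exists_matching [Nonempty M] [Nonempty W] (h : IsLadder E P Φ d) :
    ∃ (f : M → W) (x : ι → M),
    (∀ β, ∀ m ∈ (d β).1, m ≠ x β → f m ∈ (d β).2 ∧ E m (f m)) ∧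
    InjOn f {m | ∃ β, m ∈ (d β).1 ∧ m ≠ x β} := by
  classical
  have hch : ∀ β, ∃ (j : W → M) (x : M), ∀ m ∈ (d β).1, m ≠ x → ∃ w ∈ (d β).2, E m w ∧ j w = m := by
    intro β
    by_cases hβ : Hindered E (P \ lA d β) (lR d β)
    · obtain ⟨h1, j, x, hx⟩ := h.hind β hβ
      refine ⟨j, x, fun m hm hne => ?_⟩
      obtain ⟨w, hw, he⟩ := hx.cov m hm hne
      exact ⟨w, h1 ▸ hw, he ▸ hx.wave.adj w hw, he⟩
    · refine ⟨fun _ => Classical.arbitrary M, Classical.arbitrary M, fun m hm => ?_⟩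
      rw [h.unh β hβ] at hm
      exact absurd hm (notMem_empty m)
  choose j x hx using hch
  have hf : ∀ m, ∃ w, ∀ β, m ∈ (d β).1 → m ≠ x β → w ∈ (d β).2 ∧ E m w ∧ j β w = m := by
    intro m
    by_cases hm : ∃ β, m ∈ (d β).1 ∧ m ≠ x β
    · obtain ⟨β, h1, h2⟩ := hm
      obtain ⟨w, hw⟩ := hx β m h1 h2
      refine ⟨w, fun γ hγ _ => ?_⟩
      rw [← h.fst_eq h1 hγ]
      exact hw
    · exact ⟨Classical.arbitrary W, fun β h1 h2 => absurd ⟨β, h1, h2⟩ hm⟩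
  choose f hf using hf
  refine ⟨f, x, fun β m hm hne => ⟨(hf m β hm hne).1, (hf m β hm hne).2.1⟩, ?_⟩
  rintro m ⟨β, h1, h2⟩ m' ⟨γ, h3, h4⟩ he
  have h5 := hf m β h1 h2
  have h6 := hf m' γ h3 h4
  have : β = γ := h.snd_eq h5.1 (he ▸ h6.1)
  subst this
  rw [← h5.2.2, ← h6.2.2, he]

end IsLadder

/-- In an unhindered graph, a matching of all men but at most `c` can be replaced by one of all
men. -/
def Absorb (M W : Type u) (c : Cardinal.{u}) : Prop :=
  ∀ (E : M → W → Prop) (P L : Set M), ¬ Hindered E P ∅ → L ⊆ P → #L ≤ c →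
    Matchable E (P \ L) → Matchable E P

/-- The remaining men `Q` taken before stage `c'` can be matched into the women of the ladder outside
`T`. All but few of them are matched by the ladder itself; the others are absorbed. -/
theorem IsLadder.gap_core [Nonempty M] [Nonempty W] {E : M → W → Prop} {P : Set M}
    {Φ : ι → (ι → Set M × Set W) → Set W} {d : ι → Set M × Set W} (h : IsLadder E P Φ d)
    (hQ : ∀ c < #ι, Absorb M W c) {c c' : ι} {Q : Set M} {T : Set W}
    (hQA : Disjoint Q (lA d c)) (hT : #(T \ lR d c : Set W) < #ι) (hU : ¬ Hindered E Q T) :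
    ∃ f : M → W, InjOn f (Q ∩ lA d c') ∧
      ∀ m ∈ Q ∩ lA d c', E m (f m) ∧ f m ∈ lR d c' ∧ f m ∉ T := by
  obtain ⟨f₀, x, h1, h2⟩ := h.exists_matching
  let G : Set M := {m | ∃ β, m ∈ (d β).1 ∧ m ≠ x β}
  -- `L` consists of the leftovers of the stages and of the men whose partner lies in `T`
  let L : Set M := (Q ∩ lA d c') ∩ ((x '' Iio c') ∪ {m | m ∈ G ∧ f₀ m ∈ T \ lR d c})
  have hL : #L < #ι := by
    refine lt_of_le_of_lt (mk_le_mk_of_subset inter_subset_right) (mk_union_lt ?_ ?_)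
    · exact mk_image_le.trans_lt (RegIdx.Iio_lt c')
    · refine lt_of_le_of_lt ?_ hT
      exact ⟨⟨fun m => ⟨f₀ m.1, m.2.2⟩, fun a b hab => Subtype.ext
        (h2 a.2.1 b.2.1 (congrArg Subtype.val hab))⟩⟩
  have hM : Matchable (del E T) ((Q ∩ lA d c') \ L) := by
    have hk : ∀ m ∈ (Q ∩ lA d c') \ L, ∃ β, m ∈ (d β).1 ∧ m ≠ x β := by
      rintro m ⟨hm, hmL⟩
      obtain ⟨β, hβ, hmβ⟩ := hm.2
      exact ⟨β, hmβ, fun he => hmL ⟨hm, Or.inl ⟨β, hβ, he.symm⟩⟩⟩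
    refine ⟨f₀, h2.mono hk, fun m hm => ?_⟩
    obtain ⟨β, h3, h4⟩ := hk m hm
    have h5 := h1 β m h3 h4
    refine ⟨h5.2, fun hmT => ?_⟩
    by_cases hR : f₀ m ∈ lR d c
    · obtain ⟨γ, hγ, hγm⟩ := hR
      have := h.snd_eq h5.1 hγm
      subst this
      exact disjoint_left.1 hQA hm.1.1 ⟨β, hγ, h3⟩
    · exact hm.2 ⟨hm.1, Or.inr ⟨⟨β, h3, h4⟩, hmT, hR⟩⟩
  have hU' : ¬ Hindered (del E T) (Q ∩ lA d c') ∅ := by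
    rw [hindered_del, union_empty]
    exact fun hh => hU (hh.mono inter_subset_left)
  obtain ⟨f, hf1, hf2⟩ := hQ _ hL _ _ L hU' inter_subset_left le_rfl hM
  exact ⟨f, hf1, fun m hm => ⟨(hf2 m hm).1, h.nbr_lA hm.2 (hf2 m hm).1, (hf2 m hm).2⟩⟩

/-- `b` is a neighbour of `a` whose deletion together with `a` keeps the graph on `P \ A` without `R`
unhindered. -/
def Safe (E : M → W → Prop) (P A : Set M) (R : Set W) (a : M) (b : W) : Prop :=
  b ∉ R ∧ E a b ∧ ¬ Hindered E ((P \ A) \ {a}) (insert b R)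

/-- A fixed choice of a safe partner of `a`; meaningful when the graph on `P \ A` without `R` is
unhindered and contains `a`. -/
noncomputable def safeWife [Nonempty W] (E : M → W → Prop) (P A : Set M) (R : Set W) (a : M) : W :=
  Classical.epsilon (Safe E P A R a)

theorem safeWife_spec [Nonempty W] {E : M → W → Prop} {P A : Set M} {R : Set W} {a : M}
    (hU : ¬ Hindered E (P \ A) R) (ha : a ∈ P \ A) : Safe E P A R a (safeWife E P A R a) :=
  Classical.epsilon_spec (exists_safe_edge hU ha)

/-- `f` matches the men of `A' \ A` and the extra men `O` into `R' \ R`. -/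
def IsGapMatching (E : M → W → Prop) (A : Set M) (R : Set W) (A' : Set M) (R' : Set W) (O : Set M)
    (f : M → W) : Prop :=
  InjOn f ((A' \ A) ∪ O) ∧ ∀ m ∈ (A' \ A) ∪ O, E m (f m) ∧ f m ∈ R' ∧ f m ∉ R

/-- A fixed choice of a gap matching, depending only on the sets involved; meaningful when one
exists. -/
noncomputable def gapMatching [Nonempty W] (E : M → W → Prop) (A : Set M) (R : Set W) (A' : Set M)
    (R' : Set W) (O : Set M) : M → W :=
  Classical.epsilon (IsGapMatching E A R A' R' O)

/-- If stage `c` is unhindered, the gap between stages `c` and `c'` has a gap matching, and at most one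
extra man can be accommodated provided that the ladder takes his safe partner at stage `c`. -/
theorem IsLadder.gap [Nonempty W] {E : M → W → Prop} {P : Set M}
    {Φ : ι → (ι → Set M × Set W) → Set W} {d : ι → Set M × Set W} (h : IsLadder E P Φ d)
    (hQ : ∀ c < #ι, Absorb M W c) {c c' : ι} (hcc : c < c')
    (hU : ¬ Hindered E (P \ lA d c) (lR d c)) {O : Set M} (hO : O.Subsingleton)
    (hOP : O ⊆ P \ lA d c) (hOb : ∀ a ∈ O, safeWife E P (lA d c) (lR d c) a ∈ (d c).2) :
    IsGapMatching E (lA d c) (lR d c) (lA d c') (lR d c') O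
      (gapMatching E (lA d c) (lR d c) (lA d c') (lR d c') O) := by
  classical
  refine Classical.epsilon_spec (p := IsGapMatching E (lA d c) (lR d c) (lA d c') (lR d c') O) ?_
  by_cases hMn : Nonempty M
  swap
  · rw [not_nonempty_iff] at hMn
    exact ⟨fun _ => Classical.arbitrary W, fun a => isEmptyElim a, fun a => isEmptyElim a⟩
  rcases hO.eq_empty_or_singleton with rfl | ⟨a, rfl⟩
  · obtain ⟨f, h1, h2⟩ := h.gap_core hQ (c := c) (c' := c') disjoint_sdiff_left
      (by rw [sdiff_self]; exact (Cardinal.mk_eq_zero (∅ : Set W)).trans_lt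
            (pos_of_gt (RegIdx.unc (ι := ι)))) hU
    have hs : (lA d c' \ lA d c) ∪ ∅ ⊆ (P \ lA d c) ∩ lA d c' := by
      rw [union_empty]; exact fun m hm => ⟨⟨h.lA_sub c' hm.1, hm.2⟩, hm.1⟩
    exact ⟨f, h1.mono hs, fun m hm => h2 m (hs hm)⟩
  · set b := safeWife E P (lA d c) (lR d c) a with hb
    have ha : a ∈ P \ lA d c := hOP rfl
    obtain ⟨hb1, hb2, hb3⟩ := safeWife_spec hU ha
    rw [← hb] at hb1 hb2 hb3
    have hbd : b ∈ (d c).2 := hOb a rfl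
    obtain ⟨f, h1, h2⟩ := h.gap_core hQ (c := c) (c' := c') (Q := (P \ lA d c) \ {a})
      (T := insert b (lR d c)) (disjoint_sdiff_left.mono_left sdiff_subset) (by
        refine lt_of_le_of_lt (mk_le_mk_of_subset (t := {b}) fun w hw => ?_) ?_
        · exact hw.1.resolve_right hw.2
        · rw [mk_singleton]; exact one_lt_aleph0.trans (RegIdx.unc (ι := ι))) hb3
    have hs : ∀ m ∈ (lA d c' \ lA d c) ∪ {a}, m ≠ a → m ∈ ((P \ lA d c) \ {a}) ∩ lA d c' := by
      rintro m (hm | hm) hne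
      · exact ⟨⟨⟨h.lA_sub c' hm.1, hm.2⟩, hne⟩, hm.1⟩
      · exact absurd hm hne
    refine ⟨Function.update f a b, ?_, fun m hm => ?_⟩
    · intro m hm m' hm' he
      by_cases hma : m = a <;> by_cases hma' : m' = a
      · rw [hma, hma']
      · rw [hma, Function.update_self, Function.update_of_ne hma'] at he
        exact absurd (Or.inl he.symm) (h2 m' (hs m' hm' hma')).2.2
      · rw [hma', Function.update_self, Function.update_of_ne hma] at he
        exact absurd (Or.inl he) (h2 m (hs m hm hma)).2.2
      · rw [Function.update_of_ne hma, Function.update_of_ne hma'] at he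
        exact h1 (hs m hm hma) (hs m' hm' hma') he
    · by_cases hma : m = a
      · rw [hma, Function.update_self]
        exact ⟨hb2, ⟨c, hcc, hbd⟩, hb1⟩
      · rw [Function.update_of_ne hma]
        obtain ⟨h3, h4, h5⟩ := h2 m (hs m hm hma)
        exact ⟨h3, h4, fun h => h5 (Or.inr h)⟩

/-- Gluing the gap matchings between consecutive points of a closed set of unhindered stages gives a
matching of all men of the ladder and of the set `A`; each `a ∈ A` not yet taken at its stage `g a`
is the extra man of the gap beginning there. -/
theorem IsLadder.assemble [Nonempty W] {E : M → W → Prop} {P : Set M}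
    {Φ : ι → (ι → Set M × Set W) → Set W} {d : ι → Set M × Set W} (h : IsLadder E P Φ d)
    (hQ : ∀ c < #ι, Absorb M W c) {f nxt : ι → ι}
    (hf : ∀ c ∈ closedPts f, ¬ Hindered E (P \ lA d c) (lR d c))
    (hnxt : ∀ c, nxt c ∈ closedPts f ∧ c < nxt c ∧ ∀ d ∈ closedPts f, c < d → nxt c ≤ d)
    {A : Set M} (hA : A ⊆ P) {g : M → ι} (hg : ∀ a ∈ A, g a ∈ closedPts f) (hgi : InjOn g A)
    (hgb : ∀ a ∈ A, a ∉ lA d (g a) →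
      safeWife E P (lA d (g a)) (lR d (g a)) a ∈ (d (g a)).2) :
    ∃ F : M → W, InjOn F ({m | ∃ β, m ∈ (d β).1} ∪ A) ∧
      ∀ m ∈ {m | ∃ β, m ∈ (d β).1} ∪ A, E m (F m) ∧ ∃ c ∈ closedPts f,
        m ∈ (lA d (nxt c) \ lA d c) ∪ {a ∈ A | g a = c ∧ a ∉ lA d c} ∧
        (m ∈ A → m ∉ lA d (g m) → c = g m) ∧ F m ∈ lR d (nxt c) ∧ F m ∉ lR d c ∧
        F m = gapMatching E (lA d c) (lR d c) (lA d (nxt c)) (lR d (nxt c))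
          {a ∈ A | g a = c ∧ a ∉ lA d c} m := by
  classical
  have hgap : ∀ c ∈ closedPts f, IsGapMatching E (lA d c) (lR d c) (lA d (nxt c)) (lR d (nxt c))
      {a ∈ A | g a = c ∧ a ∉ lA d c} (gapMatching E (lA d c) (lR d c) (lA d (nxt c))
        (lR d (nxt c)) {a ∈ A | g a = c ∧ a ∉ lA d c}) := by
    intro c hc
    refine h.gap hQ (hnxt c).2.1 (hf c hc) ?_ ?_ ?_
    · rintro a ⟨h1, h2, -⟩ b ⟨h3, h4, -⟩
      exact hgi h1 h3 (h2.trans h4.symm)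
    · rintro a ⟨h1, h2, h3⟩
      exact ⟨hA h1, h3⟩
    · rintro a ⟨h1, rfl, h3⟩
      exact hgb a h1 h3
  have hc : ∀ m, ∃ c, m ∈ {m | ∃ β, m ∈ (d β).1} ∪ A → c ∈ closedPts f ∧
      m ∈ (lA d (nxt c) \ lA d c) ∪ {a ∈ A | g a = c ∧ a ∉ lA d c} ∧
      (m ∈ A → m ∉ lA d (g m) → c = g m) := by
    intro m
    by_cases hm : m ∈ A ∧ m ∉ lA d (g m)
    · exact ⟨g m, fun _ => ⟨hg m hm.1, Or.inr ⟨hm.1, rfl, hm.2⟩, fun _ _ => rfl⟩⟩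
    by_cases hm' : ∃ β, m ∈ (d β).1
    · obtain ⟨β, hβ⟩ := hm'
      obtain ⟨c, hc, hcβ, hmax⟩ := exists_floor f β
      refine ⟨c, fun _ => ⟨hc, Or.inl ⟨⟨β, ?_, hβ⟩, ?_⟩, fun h1 h2 => absurd ⟨h1, h2⟩ hm⟩⟩
      · by_contra hlt
        exact absurd (hnxt c).2.1 (not_lt.2 (hmax _ (hnxt c).1 (not_lt.1 hlt)))
      · rintro ⟨γ, hγ, hmγ⟩
        exact absurd (h.fst_eq hβ hmγ) (hγ.trans_le hcβ).ne'
    · refine ⟨g m, fun h' => ?_⟩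
      rcases h' with h' | h'
      · exact absurd h' hm'
      · have : m ∈ lA d (g m) := by
          by_contra hc; exact hm ⟨h', hc⟩
        obtain ⟨β, -, hβ⟩ := this
        exact absurd ⟨β, hβ⟩ hm'
  choose cc hcc using hc
  let F : M → W := fun m => gapMatching E (lA d (cc m)) (lR d (cc m)) (lA d (nxt (cc m)))
    (lR d (nxt (cc m))) {a ∈ A | g a = cc m ∧ a ∉ lA d (cc m)} m
  have hF : ∀ m ∈ {m | ∃ β, m ∈ (d β).1} ∪ A, E m (F m) ∧ F m ∈ lR d (nxt (cc m)) ∧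
      F m ∉ lR d (cc m) := fun m hm => (hgap _ (hcc m hm).1).2 m (hcc m hm).2.1
  refine ⟨F, ?_, fun m hm => ⟨(hF m hm).1, cc m, (hcc m hm).1, (hcc m hm).2.1, (hcc m hm).2.2, (hF m hm).2.1,
    (hF m hm).2.2, rfl⟩⟩
  intro m hm m' hm' he
  have hle : ∀ m ∈ {m | ∃ β, m ∈ (d β).1} ∪ A, ∀ m' ∈ {m | ∃ β, m ∈ (d β).1} ∪ A,
      F m = F m' → ¬ cc m < cc m' := by
    intro m hm m' hm' he hlt
    refine (hF m' hm').2.2 (he ▸ lR_mono d ?_ (hF m hm).2.1)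
    exact (hnxt _).2.2 _ (hcc m' hm').1 hlt
  have heq : cc m = cc m' :=
    le_antisymm (not_lt.1 (hle m' hm' m hm he.symm)) (not_lt.1 (hle m hm m' hm' he))
  have h1 := (hcc m hm).2.1
  have h2 := (hcc m' hm').2.1
  have h3 := (hgap _ (hcc m' hm').1).1
  have he' : F m = gapMatching E (lA d (cc m')) (lR d (cc m')) (lA d (nxt (cc m')))
    (lR d (nxt (cc m'))) {a ∈ A | g a = cc m' ∧ a ∉ lA d (cc m')} m := by
      rw [← heq]
  rw [heq] at h1
  exact h3 h1 h2 (he'.symm.trans he)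

end KonigInf

/-! ### Extending partial matchings -/

namespace KonigInf
universe u
open Cardinal Set
set_option linter.unusedSectionVars false

variable {M W : Type u}

/-- Any set `A` of at most `c` men of an unhindered graph is contained in a set `P \ P'` of men that
can be matched, with new women in `R'`, so that the rest is unhindered. -/
def Extend (M W : Type u) (c : Cardinal.{u}) : Prop :=
  ∀ (E : M → W → Prop) (P : Set M) (R : Set W) (A : Set M), ¬ Hindered E P R → A ⊆ P → #A ≤ c →
    ∃ P' ⊆ P \ A, ∃ R' ⊇ R, ∃ f : M → W, InjOn f (P \ P') ∧
      (∀ m ∈ P \ P', E m (f m) ∧ f m ∈ R' ∧ f m ∉ R) ∧ ¬ Hindered E P' R'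

theorem extend_finite [Nonempty W] {c : Cardinal.{u}} (hc : c < ℵ₀) : Extend M W c := by
  classical
  intro E P R A hU hA hAc
  have hfin : A.Finite := lt_aleph0_iff_set_finite.1 (hAc.trans_lt hc)
  clear hAc
  induction A, hfin using Set.Finite.induction_on with
  | empty => exact ⟨P, by simp, R, subset_rfl, fun _ => Classical.arbitrary W, by simp, by simp, hU⟩
  | @insert a s has _ ih =>
    obtain ⟨P', hP', R', hR', f, h1, h2, h3⟩ := ih ((subset_insert _ _).trans hA)
    by_cases ha : a ∈ P'
    · obtain ⟨b, hb1, hb2, hb3⟩ := exists_safe_edge h3 ha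
      have haP : a ∉ P \ P' := fun h => h.2 ha
      have hs : ∀ m ∈ P \ (P' \ {a}), m ≠ a → m ∈ P \ P' := fun m hm hne =>
        ⟨hm.1, fun h => hm.2 ⟨h, hne⟩⟩
      refine ⟨P' \ {a}, fun m hm => ⟨(hP' hm.1).1, ?_⟩, insert b R',
        hR'.trans (subset_insert _ _), Function.update f a b, ?_, fun m hm => ?_, hb3⟩
      · rintro (h | h)
        · exact hm.2 h
        · exact (hP' hm.1).2 h
      · intro m hm m' hm' he
        by_cases hma : m = a <;> by_cases hma' : m' = a
        · rw [hma, hma']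
        · rw [hma, Function.update_self, Function.update_of_ne hma'] at he
          exact absurd (h2 m' (hs m' hm' hma')).2.1 (he ▸ hb1)
        · rw [hma', Function.update_self, Function.update_of_ne hma] at he
          exact absurd (h2 m (hs m hm hma)).2.1 (he ▸ hb1)
        · rw [Function.update_of_ne hma, Function.update_of_ne hma'] at he
          exact h1 (hs m hm hma) (hs m' hm' hma') he
      · by_cases hma : m = a
        · rw [hma, Function.update_self]
          exact ⟨hb2, mem_insert _ _, fun h => hb1 (hR' h)⟩
        · rw [Function.update_of_ne hma]
          obtain ⟨h4, h5, h6⟩ := h2 m (hs m hm hma)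
          exact ⟨h4, Or.inr h5, h6⟩
    · refine ⟨P', fun m hm => ⟨(hP' hm).1, ?_⟩, R', hR', f, h1, h2, h3⟩
      rintro (rfl | h)
      · exact ha hm
      · exact (hP' hm).2 h

/-- Each man of `A` can be assigned a closed point of his own, beyond a prescribed bound. -/
theorem exists_selection {ι : Type u} [LinearOrder ι] [WellFoundedLT ι] [RegIdx ι] (f : ι → ι)
    (A : Set M) (hA : #A ≤ #ι) (t : M → ι) :
    ∃ g : M → ι, (∀ a ∈ A, g a ∈ closedPts f ∧ t a < g a) ∧ InjOn g A := by
  classical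
  obtain ⟨sel, h1, h2⟩ := greedy (ι := ι) (T := A) (Y := ι) hA
    (fun a o => o ∈ closedPts f ∧ t a < o) (fun o => {o})
    (fun _ o _ => by rw [mk_singleton]; exact one_lt_aleph0.trans (RegIdx.unc (ι := ι)))
    (fun a V hV => by
      obtain ⟨i, hi⟩ := exists_bound hV (fun x => (x : ι))
      obtain ⟨c, hc, hic⟩ := exists_closedPt_gt f (max i (t a))
      refine ⟨c, ⟨hc, (le_max_right _ _).trans_lt hic⟩, ?_⟩
      rw [disjoint_singleton_left]
      exact fun h => absurd (hi ⟨c, h⟩) (not_lt.2 ((le_max_left _ _).trans hic.le)))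
  refine ⟨fun m => if h : m ∈ A then sel ⟨m, h⟩ else t m, fun a ha => ?_, fun a ha b hb hab => ?_⟩
  · simp only [ha, dite_true]; exact h1 _
  · simp only [ha, hb, dite_true] at hab
    by_contra hne
    have := h2 ⟨a, ha⟩ ⟨b, hb⟩ (fun h => hne (congrArg Subtype.val h))
    rw [disjoint_singleton] at this
    exact this hab

/-- A ladder of length `c⁺` that takes safe partners of the men of `A` at all unhindered stages is
assembled with distinct stages `g a` for `a ∈ A`, and cut at a closed point past all of them. -/
theorem extend_of_absorb [Nonempty W] {c : Cardinal.{u}} (hc : ℵ₀ ≤ c)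
    (hQ : ∀ x ≤ c, Absorb M W x) : Extend M W c := by
  classical
  -- replacing `E` by `del E R` reduces to `R = ∅`
  suffices hmain : ∀ (E : M → W → Prop) (P A : Set M), ¬ Hindered E P ∅ → A ⊆ P → #A ≤ c →
      ∃ P' ⊆ P \ A, ∃ R' : Set W, ∃ f : M → W, InjOn f (P \ P') ∧
      (∀ m ∈ P \ P', E m (f m) ∧ f m ∈ R') ∧ ¬ Hindered E P' R' by
    intro E P R A hU hA hAc
    obtain ⟨P', hP', R', f, h1, h2, h3⟩ := hmain (del E R) P A
      (by rwa [hindered_del, union_empty]) hA hAc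
    exact ⟨P', hP', R ∪ R', subset_union_left, f, h1,
      fun m hm => ⟨(h2 m hm).1.1, Or.inr (h2 m hm).2, (h2 m hm).1.2⟩, by rwa [hindered_del] at h3⟩
  intro E P A hU hA hAc
  obtain ⟨ι, _, _, _, hι⟩ := exists_regIdx (Order.succ c) (isRegular_succ hc)
    (hc.trans_lt (Order.lt_succ c))
  have hAι : #A < #ι := by rw [hι]; exact hAc.trans_lt (Order.lt_succ c)
  let Φ : ι → (ι → Set M × Set W) → Set W := fun β d =>
    safeWife E P (lA d β) (lR d β) '' (A \ lA d β)
  obtain ⟨d, hd⟩ := exists_ladder E P Φ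
  obtain ⟨f, hf⟩ := hd.null_hind hU fun β =>
    mk_image_le.trans_lt ((mk_le_mk_of_subset sdiff_subset).trans_lt hAι)
  have hfc : ∀ c ∈ closedPts f, ¬ Hindered E (P \ lA d c) (lR d c) := by
    intro c hc hh
    obtain ⟨β, hβ, hle⟩ := hf c hh
    exact absurd (hc β hβ) (not_lt.2 hle)
  obtain ⟨nxt, hnxt⟩ := exists_nxt f
  have hne : Nonempty ι := mk_ne_zero_iff.1 (pos_of_gt hAι).ne'
  obtain ⟨g, hg1, hg2⟩ := exists_selection f A hAι.le (fun _ => hne.some)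
  obtain ⟨F, hF1, hF2⟩ := hd.assemble (fun x hx => hQ x (Order.lt_succ_iff.1 (hι ▸ hx))) hfc hnxt hA
    (fun a ha => (hg1 a ha).1) hg2 (by
      intro a ha haA
      have hUg := hfc _ (hg1 a ha).1
      rw [hd.unh _ hUg]
      refine ⟨⟨a, ?_, ?_⟩, (safeWife_spec hUg ⟨hA ha, haA⟩).1⟩
      · rw [lA_trunc d le_rfl]; exact ⟨ha, haA⟩
      · rw [lA_trunc d le_rfl, lR_trunc d le_rfl])
  obtain ⟨γ₀, hγ₀⟩ := exists_bound hAι (fun a => g a)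
  obtain ⟨γ, hγ, hγγ⟩ := exists_closedPt_gt f γ₀
  have hs : ∀ m ∈ P \ ((P \ lA d γ) \ A), m ∈ lA d γ ∨ m ∈ A := by
    rintro m ⟨hm1, hm2⟩
    by_contra! hc
    exact hm2 ⟨⟨hm1, hc.1⟩, hc.2⟩
  have hs' : ∀ m, m ∈ lA d γ ∨ m ∈ A → m ∈ {m | ∃ β, m ∈ (d β).1} ∪ A := by
    rintro m (⟨β, -, hm⟩ | hm)
    · exact Or.inl ⟨β, hm⟩
    · exact Or.inr hm
  refine ⟨(P \ lA d γ) \ A, fun m hm => ⟨hm.1.1, hm.2⟩, lR d γ, F,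
    hF1.mono fun m hm => hs' m (hs m hm), fun m hm => ?_,
    fun hh => hfc γ hγ (hh.mono sdiff_subset)⟩
  obtain ⟨h1, c, hc, h2, hcg, h3, -, -⟩ := hF2 m (hs' m (hs m hm))
  refine ⟨h1, lR_mono d ((hnxt c).2.2 γ hγ ?_) h3⟩
  have hgγ : ∀ a ∈ A, g a < γ := fun a ha => (hγ₀ ⟨a, ha⟩).trans hγγ
  by_cases hmγ : m ∈ lA d γ
  · rcases h2 with h2 | ⟨h2, rfl, -⟩
    · by_contra hlt
      exact h2.2 (lA_mono d (not_lt.1 hlt) hmγ)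
    · exact hgγ m h2
  · have hmA := (hs m hm).resolve_left hmγ
    rw [hcg hmA fun h => hmγ (lA_mono d (hgγ m hmA).le h)]
    exact hgγ m hmA

end KonigInf

/-! ### Absorption at regular cardinals -/

namespace KonigInf
universe u
open Cardinal Set
set_option linter.unusedSectionVars false

variable {M W : Type u}

theorem mk_iUnion_le_of_le {I Y : Type u} {κ : Cardinal.{u}} (hκ : ℵ₀ ≤ κ) (hI : #I ≤ κ)
    (S : I → Set Y) (hS : ∀ i, #(S i) ≤ κ) : #(⋃ i, S i) ≤ κ := by
  refine (mk_iUnion_le_sum_mk).trans ((sum_le_sum _ (fun _ => κ) hS).trans ?_)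
  rw [sum_const']
  exact (mul_le_mul' hI le_rfl).trans (mul_eq_self hκ).le

theorem mk_iUnion_nat_le {Y : Type u} {κ : Cardinal.{u}} (hκ : ℵ₀ ≤ κ)
    (S : ℕ → Set Y) (hS : ∀ i, #(S i) ≤ κ) : #(⋃ i, S i) ≤ κ := by
  have := mk_iUnion_le_of_le hκ (I := ULift.{u} ℕ) (by simpa using hκ) (fun n => S n.down)
    (fun n => hS n.down)
  refine (mk_le_mk_of_subset fun y hy => ?_).trans this
  obtain ⟨n, hn⟩ := mem_iUnion.1 hy
  exact mem_iUnion.2 ⟨⟨n⟩, hn⟩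

section
variable {ι : Type u} [LinearOrder ι] [WellFoundedLT ι] [RegIdx ι]

/-- The least set of men containing `L` and closed under adding `m' ∈ P \ L` whenever the `f₀`-partner
of `m'` is the partner of a member under a gap matching between two stages up to `β`, without extra
man (`step`) or with a member as extra man (`step'`). It depends on `d` before `β` only. -/
inductive KMem [Nonempty W] (E : M → W → Prop) (P L : Set M) (f₀ : M → W)
    (d : ι → Set M × Set W) (β : ι) : M → Prop
  | base {m : M} : m ∈ L → KMem E P L f₀ d β m
  | step {m m' : M} {c c' : ι} : m' ∈ P \ L → c ≤ β → c' ≤ β → KMem E P L f₀ d β m →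
      f₀ m' = gapMatching E (lA d c) (lR d c) (lA d c') (lR d c') ∅ m → KMem E P L f₀ d β m'
  | step' {m m' o : M} {c c' : ι} : m' ∈ P \ L → c ≤ β → c' ≤ β → KMem E P L f₀ d β m →
      KMem E P L f₀ d β o →
      f₀ m' = gapMatching E (lA d c) (lR d c) (lA d c') (lR d c') {o} m → KMem E P L f₀ d β m'

variable [Nonempty W] {E : M → W → Prop} {P L : Set M} {f₀ : M → W} {d d' : ι → Set M × Set W}
  {β β' : ι}

theorem KMem.congr (hβ : β ≤ β') (hd : ∀ c ≤ β, lA d c = lA d' c ∧ lR d c = lR d' c) {m : M}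
    (h : KMem E P L f₀ d β m) : KMem E P L f₀ d' β' m := by
  induction h with
  | base h => exact .base h
  | step h1 h2 h3 _ h4 ih =>
    rw [(hd _ h2).1, (hd _ h2).2, (hd _ h3).1, (hd _ h3).2] at h4
    exact .step h1 (h2.trans hβ) (h3.trans hβ) ih h4
  | step' h1 h2 h3 _ _ h4 ih ih' =>
    rw [(hd _ h2).1, (hd _ h2).2, (hd _ h3).1, (hd _ h3).2] at h4
    exact .step' h1 (h2.trans hβ) (h3.trans hβ) ih ih' h4

theorem KMem.mono (hβ : β ≤ β') {m : M} (h : KMem E P L f₀ d β m) : KMem E P L f₀ d β' m :=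
  h.congr hβ fun _ _ => ⟨rfl, rfl⟩

theorem kMem_trunc (hβ : β ≤ β') :
    {m | KMem E P L f₀ (trunc d β') β m} = {m | KMem E P L f₀ d β m} := by
  ext m
  exact ⟨fun h => h.congr le_rfl fun c hc =>
      ⟨lA_trunc d (hc.trans hβ), lR_trunc d (hc.trans hβ)⟩,
    fun h => h.congr le_rfl fun c hc =>
      ⟨(lA_trunc d (hc.trans hβ)).symm, (lR_trunc d (hc.trans hβ)).symm⟩⟩

theorem KMem.mem (hL : L ⊆ P) {m : M} (h : KMem E P L f₀ d β m) : m ∈ P := by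
  cases h with
  | base h => exact hL h
  | step h => exact h.1
  | step' h => exact h.1

/-- The closure of a set of size at most `#ι` has size at most `#ι`, because each new man is determined
by his `f₀`-partner and hence by the data of the step producing him. -/
theorem mk_kMem_le (hι : ℵ₀ ≤ #ι) (hL : #L ≤ #ι) (hf : InjOn f₀ (P \ L)) :
    #{m | KMem E P L f₀ d β m} ≤ #ι := by
  classical
  let H : (T : Set M) → ι × ι × T × Option T → W := fun T p =>
    gapMatching E (lA d p.1) (lR d p.1) (lA d p.2.1) (lR d p.2.1)
      (p.2.2.2.elim ∅ fun o => {o.1}) p.2.2.1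
  let N : Set M → Set M := fun T => {m' | m' ∈ P \ L ∧ f₀ m' ∈ range (H T)}
  have hN : ∀ T : Set M, #T ≤ #ι → #(N T) ≤ #ι := by
    intro T hT
    have h1 : #(N T) ≤ #(range (H T)) :=
      ⟨⟨fun m => ⟨f₀ m.1, m.2.2⟩, fun a b hab => Subtype.ext
        (hf a.2.1 b.2.1 (congrArg Subtype.val hab))⟩⟩
    refine h1.trans (mk_range_le.trans ?_)
    have h2 : #(Option T) ≤ #ι := by
      rw [mk_option]; exact add_le_of_le hι hT (one_le_aleph0.trans hι)
    simp only [mk_prod, lift_id]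
    exact mul_le_of_le hι le_rfl (mul_le_of_le hι le_rfl (mul_le_of_le hι hT h2))
  let T : ℕ → Set M := fun n => Nat.rec L (fun _ T => T ∪ N T) n
  have hT : ∀ n : ℕ, #(↥(T n)) ≤ #ι := by
    intro n
    induction n with
    | zero => exact hL
    | succ n ih => exact (mk_union_le _ _).trans (add_le_of_le hι ih (hN _ ih))
  have hTm : Monotone T := monotone_nat_of_le_succ fun n => subset_union_left
  refine (mk_le_mk_of_subset fun m hm => ?_).trans (mk_iUnion_nat_le hι T hT)
  change KMem E P L f₀ d β m at hm
  rw [mem_iUnion]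
  induction hm with
  | base h => exact ⟨0, h⟩
  | @step m m' c c' h1 _ _ _ h4 ih =>
    obtain ⟨n, hn⟩ := ih
    exact ⟨n + 1, Or.inr ⟨h1, (c, c', ⟨m, hn⟩, none), h4.symm⟩⟩
  | @step' m m' o c c' h1 _ _ _ _ h4 ih ih' =>
    obtain ⟨n, hn⟩ := ih
    obtain ⟨k, hk⟩ := ih'
    exact ⟨max n k + 1, Or.inr ⟨h1, (c, c', ⟨m, hTm (le_max_left n k) hn⟩,
      some ⟨o, hTm (le_max_right n k) hk⟩), h4.symm⟩⟩

end

/-- The ladder takes, at unhindered stages, safe partners of a growing part `Y d β` of the closure `A`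
of `L`, so that each man of `A` is served from some stage on. The assembled matching `F` is used on
`A` and the given matching `f₀` off `A`; they do not conflict since `A` is closed. -/
theorem absorb_regular [Nonempty W] {κ : Cardinal.{u}} (hr : κ.IsRegular) (hu : ℵ₀ < κ)
    (hQ : ∀ x < κ, Absorb M W x) : Absorb M W κ := by
  classical
  intro E P L hU hLP hLc ⟨f₀, hf₀, hf₀E⟩
  obtain ⟨ι, _, _, _, rfl⟩ := exists_regIdx κ hr hu
  have hne : Nonempty ι := mk_ne_zero_iff.1 (pos_of_gt hu).ne'
  let K : (ι → Set M × Set W) → ι → Set M := fun d β => {m | KMem E P L f₀ d β m}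
  have hK : ∀ d β, #(K d β) ≤ #ι := fun d β => mk_kMem_le hu.le hLc hf₀
  -- a fixed enumeration `r S` of each set `S` of size at most `#ι`; `Y d β` collects the first `β`
  -- elements of the closures up to earlier levels
  let r : Set M → M → ι := fun S => Classical.epsilon fun r : M → ι => InjOn r S
  have hr' : ∀ S : Set M, #S ≤ #ι → InjOn (r S) S := by
    intro S hS
    refine Classical.epsilon_spec (p := fun r : M → ι => InjOn r S) ?_
    obtain ⟨e⟩ := hS
    refine ⟨fun m => if h : m ∈ S then e ⟨m, h⟩ else hne.some, fun a ha b hb hab => ?_⟩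
    simp only [ha, hb, dite_true] at hab
    exact congrArg Subtype.val (e.injective hab)
  let Y : (ι → Set M × Set W) → ι → Set M := fun d β => {a | ∃ δ < β, a ∈ K d δ ∧ r (K d δ) a < β}
  have hY : ∀ d β, #(Y d β) < #ι := by
    intro d β
    have := mk_iUnion_lt (ι := ι) (RegIdx.Iio_lt β)
      (fun δ : Iio β => {a | a ∈ K d δ ∧ r (K d δ) a < β}) (fun δ => by
        refine lt_of_le_of_lt ?_ (RegIdx.Iio_lt β)
        exact ⟨⟨fun a => ⟨r (K d δ) a.1, a.2.2⟩, fun a b hab => Subtype.ext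
          (hr' _ (hK d δ) a.2.1 b.2.1 (congrArg Subtype.val hab))⟩⟩)
    refine (mk_le_mk_of_subset fun a ha => ?_).trans_lt this
    obtain ⟨δ, h1, h2⟩ := ha
    exact mem_iUnion.2 ⟨⟨δ, h1⟩, h2⟩
  have hYt : ∀ d β, Y (trunc d β) β = Y d β := by
    intro d β
    ext a
    refine exists_congr fun δ => and_congr_right fun hδ => ?_
    have : K (trunc d β) δ = K d δ := kMem_trunc hδ.le
    rw [this]
  let Φ : ι → (ι → Set M × Set W) → Set W := fun β d =>
    safeWife E P (lA d β) (lR d β) '' (Y d β \ lA d β)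
  obtain ⟨d, hd⟩ := exists_ladder E P Φ
  obtain ⟨f, hf⟩ := hd.null_hind hU fun β =>
    mk_image_le.trans_lt ((mk_le_mk_of_subset sdiff_subset).trans_lt (hY _ β))
  have hfc : ∀ c ∈ closedPts f, ¬ Hindered E (P \ lA d c) (lR d c) := by
    intro c hc hh
    obtain ⟨β, hβ, hle⟩ := hf c hh
    exact absurd (hc β hβ) (not_lt.2 hle)
  obtain ⟨nxt, hnxt⟩ := exists_nxt f
  let A : Set M := ⋃ β, K d β
  have hAP : A ⊆ P := iUnion_subset fun β m hm => KMem.mem hLP hm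
  have hAι : #A ≤ #ι := mk_iUnion_le_of_le hu.le le_rfl _ (hK d)
  have ht : ∀ a, ∃ t, a ∈ A → ∀ β, t < β → a ∈ Y d β := by
    intro a
    by_cases ha : a ∈ A
    · obtain ⟨δ, hδ⟩ := mem_iUnion.1 ha
      exact ⟨max δ (r (K d δ) a), fun _ β hβ =>
        ⟨δ, (le_max_left _ _).trans_lt hβ, hδ, (le_max_right _ _).trans_lt hβ⟩⟩
    · exact ⟨hne.some, fun h => absurd h ha⟩
  choose t ht using ht
  obtain ⟨g, hg1, hg2⟩ := exists_selection f A hAι t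
  obtain ⟨F, hF1, hF2⟩ := hd.assemble hQ hfc hnxt hAP
    (fun a ha => (hg1 a ha).1) hg2 (by
      intro a ha haA
      have hUg := hfc _ (hg1 a ha).1
      rw [hd.unh _ hUg]
      refine ⟨⟨a, ?_, ?_⟩, (safeWife_spec hUg ⟨hAP ha, haA⟩).1⟩
      · rw [lA_trunc d le_rfl, hYt]; exact ⟨ht a ha _ (hg1 a ha).2, haA⟩
      · rw [lA_trunc d le_rfl, lR_trunc d le_rfl])
  have hLA : L ⊆ A := fun m hm => mem_iUnion.2 ⟨hne.some, .base hm⟩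
  have hclosed : ∀ m ∈ A, ∀ m' ∈ P, m' ∉ A → F m ≠ f₀ m' := by
    intro m hm m' hm' hmA he
    have hm'L : m' ∈ P \ L := ⟨hm', fun h => hmA (hLA h)⟩
    obtain ⟨-, c, hc, -, -, -, -, h5⟩ := hF2 m (Or.inr hm)
    obtain ⟨δ, hδ⟩ := mem_iUnion.1 hm
    rw [he] at h5
    have hsub : {a ∈ A | g a = c ∧ a ∉ lA d c}.Subsingleton := by
      rintro a ⟨h1, h2, -⟩ b ⟨h3, h4, -⟩
      exact hg2 h1 h3 (h2.trans h4.symm)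
    rcases hsub.eq_empty_or_singleton with h0 | ⟨o, ho⟩
    · rw [h0] at h5
      refine hmA (mem_iUnion.2 ⟨max δ (nxt c), ?_⟩)
      exact KMem.step hm'L ((hnxt c).2.1.le.trans (le_max_right _ _)) (le_max_right _ _)
        (KMem.mono (le_max_left _ _) hδ) h5
    · have hoA : o ∈ A := (ho.symm ▸ mem_singleton o : o ∈ {a ∈ A | g a = c ∧ a ∉ lA d c}).1
      obtain ⟨δ', hδ'⟩ := mem_iUnion.1 hoA
      rw [ho] at h5
      refine hmA (mem_iUnion.2 ⟨max (max δ δ') (nxt c), ?_⟩)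
      exact KMem.step' hm'L ((hnxt c).2.1.le.trans (le_max_right _ _)) (le_max_right _ _)
        (KMem.mono ((le_max_left _ _).trans (le_max_left _ _)) hδ)
        (KMem.mono ((le_max_right _ _).trans (le_max_left _ _)) hδ') h5
  refine ⟨fun m => if m ∈ A then F m else f₀ m, ?_, ?_⟩
  · intro m hm m' hm' he
    by_cases h1 : m ∈ A <;> by_cases h2 : m' ∈ A <;>
      simp only [h1, h2, if_true, if_false] at he
    · exact hF1 (Or.inr h1) (Or.inr h2) he
    · exact absurd he (hclosed m h1 m' hm' h2)
    · exact absurd he.symm (hclosed m' h2 m hm h1)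
    · exact hf₀ ⟨hm, fun h => h1 (hLA h)⟩ ⟨hm', fun h => h2 (hLA h)⟩ he
  · intro m hm
    by_cases h1 : m ∈ A <;> simp only [h1, if_true, if_false]
    · exact (hF2 m (Or.inr h1)).1
    · exact hf₀E m ⟨hm, fun h => h1 (hLA h)⟩

end KonigInf

/-! ### Absorption at `ℵ₀` and at singular cardinals, and König's theorem -/

namespace KonigInf
universe u
open Cardinal Set
set_option linter.unusedSectionVars false

variable {M W : Type u}

/-- A partial matching: `P` is the set of men not yet matched, the others are matched by `F` into `R`,
and the men in `A` are marked. -/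
structure Part (M W : Type u) where
  P : Set M
  R : Set W
  F : M → W
  A : Set M

/-- The partial matching `s` of the men `P` uses only women in `s.R`, leaves an unhindered graph, and
has fewer than `μ` marked men, all of them matched. -/
structure Part.Ok (E : M → W → Prop) (P : Set M) (μ : Cardinal.{u}) (s : Part M W) : Prop where
  sub : s.P ⊆ P
  unh : ¬ Hindered E s.P s.R
  inj : InjOn s.F (P \ s.P)
  adj : ∀ m ∈ P \ s.P, E m (s.F m) ∧ s.F m ∈ s.R
  mark : s.A ⊆ P \ s.P
  small : #s.A < μ

/-- A partial matching can be extended so that fewer than `μ` further men become marked. -/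
theorem Part.Ok.step {E : M → W → Prop} {P : Set M} {μ : Cardinal.{u}} {s : Part M W}
    (hμ : ℵ₀ ≤ μ) (hE : ∀ x < μ, Extend M W x) (h : s.Ok E P μ) {B : Set M} (hB : B ⊆ P)
    (hBμ : #B < μ) :
    ∃ s' : Part M W, s'.Ok E P μ ∧ s'.P ⊆ s.P ∧ EqOn s'.F s.F (P \ s.P) ∧ s.A ⊆ s'.A ∧ B ⊆ s'.A := by
  classical
  obtain ⟨P', hP', R', hR', f, h1, h2, h3⟩ := hE _ hBμ E s.P s.R (B ∩ s.P) h.unh inter_subset_right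
    (mk_le_mk_of_subset inter_subset_left)
  have hP's : P' ⊆ s.P := fun m hm => (hP' hm).1
  have hne : ∀ m ∈ P \ P', m ∉ s.P → m ∈ P \ s.P := fun m hm hs => ⟨hm.1, hs⟩
  refine ⟨⟨P', R', fun m => if m ∈ s.P then f m else s.F m, s.A ∪ B⟩, ⟨hP's.trans h.sub, h3, ?_, ?_,
    ?_, ?_⟩, hP's, fun m hm => if_neg hm.2, subset_union_left, subset_union_right⟩
  · intro m hm m' hm' he
    by_cases hs : m ∈ s.P <;> by_cases hs' : m' ∈ s.P <;>
      simp only [hs, hs', if_true, if_false] at he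
    · exact h1 ⟨hs, hm.2⟩ ⟨hs', hm'.2⟩ he
    · exact absurd (he ▸ (h.adj m' ⟨hm'.1, hs'⟩).2) (h2 m ⟨hs, hm.2⟩).2.2
    · exact absurd (he ▸ (h.adj m ⟨hm.1, hs⟩).2) (h2 m' ⟨hs', hm'.2⟩).2.2
    · exact h.inj ⟨hm.1, hs⟩ ⟨hm'.1, hs'⟩ he
  · intro m hm
    by_cases hs : m ∈ s.P <;> simp only [hs, if_true, if_false]
    · exact ⟨(h2 m ⟨hs, hm.2⟩).1, (h2 m ⟨hs, hm.2⟩).2.1⟩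
    · exact ⟨(h.adj m ⟨hm.1, hs⟩).1, hR' (h.adj m ⟨hm.1, hs⟩).2⟩
  · rintro m (hm | hm)
    · exact ⟨(h.mark hm).1, fun hm' => (h.mark hm).2 (hP's hm')⟩
    · exact ⟨hB hm, fun hm' => (hP' hm').2 ⟨hm, hP's hm'⟩⟩
  · exact (mk_union_le _ _).trans_lt (add_lt_of_lt hμ h.small hBμ)

/-- Suppose that `L` is covered by sets `Ls i n` of size less than `μ i`, where `n : ℕ` and `i` ranges
over a well-order `J` smaller than each `μ i`, and that fewer than `μ i` men can always be matched
keeping the rest unhindered. Then `L` can be absorbed.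

For each `i` a growing sequence of partial matchings is built. At each of the `ω` steps the `i`-th
one is made to mark `Ls i n` and all men whose partner, under the given matching or under any of the
other partial matchings, is used by a man already marked. In the end each man marked for some `i`
is matched as prescribed by the least such `i`, and every other man as in the given matching. -/
theorem matchable_of_decomposition [Nonempty W] {E : M → W → Prop} {P L : Set M}
    (hU : ¬ Hindered E P ∅) (hLP : L ⊆ P) (hM : Matchable E (P \ L))
    {J : Type u} [LinearOrder J] [WellFoundedLT J] [Nonempty J] {μ : J → Cardinal.{u}}
    (hμ : ∀ i, ℵ₀ ≤ μ i) (hJ : ∀ i, #J < μ i) (hE : ∀ i, ∀ x < μ i, Extend M W x)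
    {Ls : J → ℕ → Set M} (hLs : ∀ i n, Ls i n ⊆ L) (hLc : ∀ i n, #(Ls i n) < μ i)
    (hL : ∀ m ∈ L, ∃ i n, m ∈ Ls i n) : Matchable E P := by
  classical
  obtain ⟨f₀, hf₀, hf₀E⟩ := hM
  let St := {σ : J → Part M W // ∀ i, (σ i).Ok E P (μ i)}
  let B : St → ℕ → J → Set M := fun σ n i => Ls i n ∪
    {m | m ∈ P \ L ∧ f₀ m ∈ (σ.1 i).F '' (σ.1 i).A} ∪
    ⋃ k, {m | m ∈ P \ (σ.1 k).P ∧ (σ.1 k).F m ∈ (σ.1 i).F '' (σ.1 i).A}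
  have hBP : ∀ σ n i, B σ n i ⊆ P := by
    rintro σ n i m ((hm | hm) | hm)
    · exact hLP (hLs i n hm)
    · exact hm.1.1
    · obtain ⟨k, hk⟩ := mem_iUnion.1 hm
      exact hk.1.1
  have hBc : ∀ σ n i, #(B σ n i) < μ i := by
    intro σ n i
    have him : #((σ.1 i).F '' (σ.1 i).A) < μ i := mk_image_le.trans_lt (σ.2 i).small
    refine (mk_union_le _ _).trans_lt (add_lt_of_lt (hμ i)
      ((mk_union_le _ _).trans_lt (add_lt_of_lt (hμ i) (hLc i n) ?_)) ?_)
    · refine lt_of_le_of_lt ?_ him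
      exact ⟨⟨fun m => ⟨f₀ m.1, m.2.2⟩, fun a b hab => Subtype.ext
        (hf₀ a.2.1 b.2.1 (congrArg Subtype.val hab))⟩⟩
    · refine mk_iUnion_le_sum_mk.trans_lt ((sum_le_sum _
        (fun _ => #((σ.1 i).F '' (σ.1 i).A)) fun k => ?_).trans_lt ?_)
      · exact ⟨⟨fun m => ⟨(σ.1 k).F m.1, m.2.2⟩, fun a b hab => Subtype.ext
          ((σ.2 k).inj a.2.1 b.2.1 (congrArg Subtype.val hab))⟩⟩
      · rw [sum_const']
        exact mul_lt_of_lt (hμ i) (hJ i) him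
  have hstep : ∀ (σ : St) (n : ℕ), ∃ σ' : St, ∀ i, (σ'.1 i).P ⊆ (σ.1 i).P ∧
      EqOn (σ'.1 i).F (σ.1 i).F (P \ (σ.1 i).P) ∧ (σ.1 i).A ⊆ (σ'.1 i).A ∧ B σ n i ⊆ (σ'.1 i).A := by
    intro σ n
    choose s' h1 h2 using fun i => (σ.2 i).step (hμ i) (hE i) (hBP σ n i) (hBc σ n i)
    exact ⟨⟨s', h1⟩, h2⟩
  choose nx hnx using hstep
  let σ₀ : St := ⟨fun _ => ⟨P, ∅, fun _ => Classical.arbitrary W, ∅⟩, fun i =>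
    ⟨subset_rfl, hU, by simp, by simp, by simp, by
      rw [Cardinal.mk_eq_zero]; exact aleph0_pos.trans_le (hμ i)⟩⟩
  let S : ℕ → St := fun n => Nat.rec σ₀ (fun n σ => nx σ n) n
  have hS : ∀ n i, ((S (n + 1)).1 i).P ⊆ ((S n).1 i).P ∧
      EqOn ((S (n + 1)).1 i).F ((S n).1 i).F (P \ ((S n).1 i).P) ∧
      ((S n).1 i).A ⊆ ((S (n + 1)).1 i).A ∧ B (S n) n i ⊆ ((S (n + 1)).1 i).A :=
    fun n i => hnx (S n) n i
  have hle : ∀ i {n k : ℕ}, n ≤ k → ((S k).1 i).P ⊆ ((S n).1 i).P ∧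
      EqOn ((S k).1 i).F ((S n).1 i).F (P \ ((S n).1 i).P) ∧ ((S n).1 i).A ⊆ ((S k).1 i).A := by
    intro i n k hnk
    induction k, hnk using Nat.le_induction with
    | base => exact ⟨subset_rfl, fun _ _ => rfl, subset_rfl⟩
    | succ k _ ih =>
      refine ⟨(hS k i).1.trans ih.1, fun m hm => ?_, ih.2.2.trans (hS k i).2.2.1⟩
      rw [(hS k i).2.1 ⟨hm.1, fun h => hm.2 (ih.1 h)⟩, ih.2.1 hm]
  let K : J → Set M := fun i => ⋃ n, ((S n).1 i).A
  have hidx : ∀ m, ∃ i, ∃ n, (∃ i, m ∈ K i) → m ∈ ((S n).1 i).A ∧ ∀ k < i, m ∉ K k := by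
    intro m
    by_cases hm : ∃ i, m ∈ K i
    · obtain ⟨i, hi, hmin⟩ := WellFounded.has_min (wellFounded_lt (α := J)) {i | m ∈ K i} hm
      obtain ⟨n, hn⟩ := mem_iUnion.1 hi
      exact ⟨i, n, fun _ => ⟨hn, fun k hk hmk => hmin k hmk hk⟩⟩
    · exact ⟨Classical.arbitrary J, 0, fun h => absurd h hm⟩
  choose idx st hidx using hidx
  let F : M → W := fun m => ((S (st m)).1 (idx m)).F m
  have hF : ∀ m, (∃ i, m ∈ K i) → ∀ n, st m ≤ n → m ∈ ((S n).1 (idx m)).A ∧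
      F m = ((S n).1 (idx m)).F m := fun m hm n hn =>
    ⟨(hle _ hn).2.2 (hidx m hm).1,
      ((hle _ hn).2.1 (((S (st m)).2 (idx m)).mark (hidx m hm).1)).symm⟩
  have hLK : ∀ m ∈ L, ∃ i, m ∈ K i := fun m hm => by
    obtain ⟨i, n, h⟩ := hL m hm
    exact ⟨i, mem_iUnion.2 ⟨n + 1, (hS n i).2.2.2 (Or.inl (Or.inl h))⟩⟩
  have hlt : ∀ m m', (∃ i, m ∈ K i) → (∃ i, m' ∈ K i) → F m = F m' → ¬ idx m < idx m' := by
    intro m m' hm hm' he hlt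
    obtain ⟨h1, h2⟩ := hF m hm _ (le_max_left (st m) (st m'))
    obtain ⟨h3, h4⟩ := hF m' hm' _ (le_max_right (st m) (st m'))
    refine (hidx m' hm').2 _ hlt (mem_iUnion.2 ⟨max (st m) (st m') + 1, (hS _ _).2.2.2 (Or.inr ?_)⟩)
    exact mem_iUnion.2 ⟨idx m', ((S _).2 _).mark h3, m, h1, by rw [← h2, ← h4, he]⟩
  have hclosed : ∀ m m', (∃ i, m ∈ K i) → m' ∈ P → (¬ ∃ i, m' ∈ K i) → F m ≠ f₀ m' := by
    intro m m' hm hm' hn he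
    obtain ⟨h1, h2⟩ := hF m hm _ le_rfl
    refine hn ⟨idx m, mem_iUnion.2 ⟨st m + 1, (hS _ _).2.2.2 (Or.inl (Or.inr ?_))⟩⟩
    exact ⟨⟨hm', fun h => hn (hLK m' h)⟩, m, h1, by rw [← h2, he]⟩
  refine ⟨fun m => if ∃ i, m ∈ K i then F m else f₀ m, ?_, ?_⟩
  · intro m hm m' hm' he
    by_cases h1 : ∃ i, m ∈ K i <;> by_cases h2 : ∃ i, m' ∈ K i <;>
      simp only [h1, h2, if_true, if_false] at he
    · have heq : idx m = idx m' :=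
        le_antisymm (not_lt.1 (hlt m' m h2 h1 he.symm)) (not_lt.1 (hlt m m' h1 h2 he))
      obtain ⟨h3, h4⟩ := hF m h1 _ (le_max_left (st m) (st m'))
      obtain ⟨h5, h6⟩ := hF m' h2 _ (le_max_right (st m) (st m'))
      rw [h4, h6, heq] at he
      rw [heq] at h3
      exact ((S _).2 _).inj (((S _).2 _).mark h3) (((S _).2 _).mark h5) he
    · exact absurd he (hclosed m m' h1 hm' h2)
    · exact absurd he.symm (hclosed m' m h2 hm h1)
    · exact hf₀ ⟨hm, fun h => h1 (hLK m h)⟩ ⟨hm', fun h => h2 (hLK m' h)⟩ he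
  · intro m hm
    by_cases h1 : ∃ i, m ∈ K i <;> simp only [h1, if_true, if_false]
    · exact (((S _).2 _).adj m (((S _).2 _).mark (hidx m h1).1)).1
    · exact hf₀E m ⟨hm, fun h => h1 (hLK m h)⟩

theorem absorb_aleph0 [Nonempty W] : Absorb M W ℵ₀ := by
  intro E P L hU hLP hLc hM
  obtain ⟨e, he⟩ := Set.countable_iff_exists_injOn.1 (le_aleph0_iff_set_countable.1 hLc)
  refine matchable_of_decomposition hU hLP hM (J := PUnit) (μ := fun _ => ℵ₀) (fun _ => le_rfl)
    (fun _ => by simp) (fun _ x hx => extend_finite hx) (Ls := fun _ n => {m | m ∈ L ∧ e m = n})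
    (fun _ _ m hm => hm.1) (fun _ n => ?_) (fun m hm => ⟨PUnit.unit, e m, hm, rfl⟩)
  refine lt_aleph0_iff_set_finite.2 (Set.Subsingleton.finite ?_)
  rintro a ⟨h1, h2⟩ b ⟨h3, h4⟩
  exact he h1 h3 (h2.trans h4.symm)

/-- `L` is the union of fewer than `κ` subsets of size less than `κ`, indexed by a cofinal subset of
`κ.ord`. -/
theorem absorb_singular [Nonempty W] {κ : Cardinal.{u}} (hs : κ.IsSingular)
    (hE : ∀ x < κ, Extend M W x) : Absorb M W κ := by
  intro E P L hU hLP hLc hM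
  have hκ : ℵ₀ ≤ κ := hs.aleph0_le
  let T := κ.ord.ToType
  have hT : #T = κ := mk_ord_toType κ
  obtain ⟨J, hJ, hJc⟩ := Order.exists_cof_eq T
  have hJκ : #J < κ := by
    rw [hJc]
    have := hs.cof_ord_lt
    rwa [← Ordinal.cof_toType] at this
  have hTne : Nonempty T := mk_ne_zero_iff.1 (by rw [hT]; exact hs.pos.ne')
  have : Nonempty J := by
    obtain ⟨j, hj, -⟩ := hJ (Classical.arbitrary T)
    exact ⟨⟨j, hj⟩⟩
  obtain ⟨e⟩ : Nonempty (L ↪ T) := by rwa [← hT] at hLc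
  let Lj : J → Set M := fun j => {m | ∃ h : m ∈ L, e ⟨m, h⟩ ≤ j}
  have hLj : ∀ j, #(Lj j) < κ := by
    intro j
    have h1 : #(Lj j) ≤ #(Iic (j : T)) :=
      ⟨⟨fun m => ⟨e ⟨m.1, m.2.1⟩, m.2.2⟩, fun a b hab => Subtype.ext
        (Subtype.mk.inj (e.injective (congrArg Subtype.val hab)))⟩⟩
    exact (h1.trans_lt (Cardinal.mk_Iic_lt _ (by simp [T]) (hκ.trans_eq hT.symm))).trans_eq hT
  have hlt : ∀ j, max (max ℵ₀ #J) #(Lj j) < κ := fun j =>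
    max_lt (max_lt (hκ.lt_of_ne fun h => not_isSingular_aleph0 (h ▸ hs)) hJκ) (hLj j)
  refine matchable_of_decomposition hU hLP hM (J := J)
    (μ := fun j => Order.succ (max (max ℵ₀ #J) #(Lj j)))
    (fun j => ((le_max_left _ _).trans (le_max_left _ _)).trans (Order.le_succ _))
    (fun j => Order.lt_succ_of_le ((le_max_right _ _).trans (le_max_left _ _)))
    (fun j x hx => hE x (hx.trans_le (Order.succ_le_of_lt (hlt j))))
    (Ls := fun j _ => Lj j) (fun j _ m hm => hm.1)
    (fun j _ => Order.lt_succ_of_le (le_max_right _ _)) (fun m hm => ?_)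
  obtain ⟨j, hj, hle⟩ := hJ (e ⟨m, hm⟩)
  exact ⟨⟨j, hj⟩, 0, hm, hle⟩

theorem absorb_all [Nonempty W] (c : Cardinal.{u}) : Absorb M W c := by
  induction c using WellFoundedLT.induction with
  | ind c ih =>
    rcases le_or_gt c ℵ₀ with hc | hc
    · exact fun E P L hU hLP hLc => absorb_aleph0 E P L hU hLP (hLc.trans hc)
    rcases isRegular_or_isSingular hc.le with hr | hs
    · exact absorb_regular hr hc ih
    · refine absorb_singular hs fun x hx => ?_
      rcases lt_or_ge x ℵ₀ with h | h
      · exact extend_finite h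
      · exact extend_of_absorb h fun y hy => ih y (hy.trans_lt hx)

/-- An unhindered graph has a matching covering all its men. -/
theorem matchable_of_not_hindered [Nonempty W] {E : M → W → Prop} {P : Set M}
    (hU : ¬ Hindered E P ∅) : Matchable E P :=
  absorb_all #P E P P hU subset_rfl le_rfl
    ⟨fun _ => Classical.arbitrary W, by simp, by simp⟩

/-- König's theorem in terms of the largest wave `X`, its neighbourhood `N`, its matching `j`, and a
matching `f` of the men outside `X`; both sides are in the same universe. -/
theorem konig_same (M W : Type u) [Nonempty M] [Nonempty W] (E : M → W → Prop) :
    ∃ (X : Set M) (N : Set W) (j : W → M) (f : M → W), (∀ m w, E m w → m ∈ X → w ∈ N) ∧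
      (∀ w ∈ N, j w ∈ X ∧ E (j w) w) ∧ InjOn j N ∧
      (∀ m ∉ X, f m ∉ N ∧ E m (f m)) ∧ InjOn f Xᶜ := by
  obtain ⟨X, -, j, hj, hmax⟩ := exists_max_wave E Set.univ ∅
  have hU : ¬ Hindered (del E (nbr E ∅ X)) Xᶜ ∅ := by
    rw [hindered_del, union_empty]
    rintro ⟨Y, hY, k, hk, x, hx, -⟩
    obtain ⟨J, hJ, -⟩ := hj.join (by rwa [empty_union]) (disjoint_left.2 fun m hm hm' => hY hm' hm)
    exact hY hx (hmax _ (subset_univ _) J hJ (Or.inr hx))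
  obtain ⟨f, hf, hfE⟩ := matchable_of_not_hindered hU
  exact ⟨X, nbr E ∅ X, j, f, fun m w he hm => ⟨notMem_empty w, m, hm, he⟩,
    fun w hw => ⟨hj.mem w hw, hj.adj w hw⟩, hj.inj, fun m hm => ⟨(hfE m hm).2, (hfE m hm).1⟩, hf⟩

/-- `konig_same` for sides in different universes. -/
theorem konig_lift.{v, w} (M : Type v) (W : Type w) [Nonempty M] [Nonempty W] (E : M → W → Prop) :
    ∃ (X : Set M) (N : Set W) (j : W → M) (f : M → W), (∀ m w, E m w → m ∈ X → w ∈ N) ∧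
      (∀ w ∈ N, j w ∈ X ∧ E (j w) w) ∧ InjOn j N ∧
      (∀ m ∉ X, f m ∉ N ∧ E m (f m)) ∧ InjOn f Xᶜ := by
  obtain ⟨X, N, j, f, h1, h2, h3, h4, h5⟩ :=
    konig_same (ULift.{w} M) (ULift.{v} W) fun m w => E m.down w.down
  exact ⟨ULift.up ⁻¹' X, ULift.up ⁻¹' N, fun w => (j ⟨w⟩).down, fun m => (f ⟨m⟩).down,
    fun m w he hm => h1 ⟨m⟩ ⟨w⟩ he hm, fun w hw => h2 ⟨w⟩ hw,
    fun a ha b hb he => congrArg ULift.down (h3 ha hb (ULift.down_injective he)),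
    fun m hm => h4 ⟨m⟩ hm,
    fun a ha b hb he => congrArg ULift.down (h5 ha hb (ULift.down_injective he))⟩

end KonigInf

/-- König's theorem for arbitrary (possibly infinite) bipartite graphs: there
exist a matching `F` and a cover `C` such that `C` consists of the choice of
precisely one vertex from each edge of `F`. -/
theorem konig_infinite (M W : Type*) (E : M → W → Prop) :
    ∃ (F : Set (M × W)) (C : Set (M ⊕ W)),
      (∀ e ∈ F, E e.1 e.2) ∧
      (∀ e ∈ F, ∀ e' ∈ F, e ≠ e' → e.1 ≠ e'.1 ∧ e.2 ≠ e'.2) ∧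
      (∀ m w, E m w → Sum.inl m ∈ C ∨ Sum.inr w ∈ C) ∧
      (∀ v ∈ C, ∃ e ∈ F, v = Sum.inl e.1 ∨ v = Sum.inr e.2) ∧
      (∀ e ∈ F, Xor' (Sum.inl e.1 ∈ C) (Sum.inr e.2 ∈ C)) := by
  rcases isEmpty_or_nonempty M with hM | hM
  · exact ⟨∅, ∅, by simp, by simp, fun m => isEmptyElim m, by simp, by simp⟩
  rcases isEmpty_or_nonempty W with hW | hW
  · exact ⟨∅, ∅, by simp, by simp, fun _ w => isEmptyElim w, by simp, by simp⟩
  obtain ⟨X, N, j, f, hXN, hj, hjinj, hf, hfinj⟩ := KonigInf.konig_lift M W E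
  refine ⟨{e | (e.2 ∈ N ∧ j e.2 = e.1) ∨ (e.1 ∉ X ∧ f e.1 = e.2)},
    {v | (∃ m, v = Sum.inl m ∧ m ∉ X) ∨ ∃ w, v = Sum.inr w ∧ w ∈ N}, ?_, ?_, ?_, ?_, ?_⟩
  · rintro ⟨m, w⟩ (⟨h1, h2⟩ | ⟨h1, h2⟩)
    · have := (hj _ h1).2
      rwa [h2] at this
    · have := (hf _ h1).2
      rwa [h2] at this
  · rintro ⟨m, w⟩ h ⟨m', w'⟩ h' hne
    suffices (m = m' ↔ w = w') by
      constructor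
      · rintro rfl; exact hne (by rw [this.1 rfl])
      · rintro rfl; exact hne (by rw [this.2 rfl])
    rcases h with ⟨h1, h2⟩ | ⟨h1, h2⟩ <;> rcases h' with ⟨h3, h4⟩ | ⟨h3, h4⟩ <;>
      simp only at h1 h2 h3 h4
    · constructor
      · rintro rfl; exact (hjinj h1 h3 (h2.trans h4.symm))
      · rintro rfl; exact (h2.symm.trans h4)
    · have hX := h2 ▸ (hj _ h1).1
      have hN := h4 ▸ (hf _ h3).1
      exact ⟨fun h => absurd (h ▸ hX) h3, fun h => absurd (h ▸ h1) hN⟩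
    · have hX := h4 ▸ (hj _ h3).1
      have hN := h2 ▸ (hf _ h1).1
      exact ⟨fun h => absurd (h ▸ hX) h1, fun h => absurd (h ▸ h3) hN⟩
    · constructor
      · rintro rfl; exact (h2.symm.trans h4)
      · rintro rfl; exact (hfinj h1 h3 (h2.trans h4.symm))
  · intro m w he
    by_cases h : m ∈ X
    · exact Or.inr (Or.inr ⟨w, rfl, hXN m w he h⟩)
    · exact Or.inl (Or.inl ⟨m, rfl, h⟩)
  · rintro v (⟨m, rfl, h⟩ | ⟨w, rfl, h⟩)
    · exact ⟨(m, f m), Or.inr ⟨h, rfl⟩, Or.inl rfl⟩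
    · exact ⟨(j w, w), Or.inl ⟨h, rfl⟩, Or.inr rfl⟩
  · rintro ⟨m, w⟩ (⟨h1, h2⟩ | ⟨h1, h2⟩) <;> simp only at h1 h2
    · have hX := h2 ▸ (hj _ h1).1
      exact Or.inr ⟨Or.inr ⟨w, rfl, h1⟩, by simpa using hX⟩
    · have hN := h2 ▸ (hf _ h1).1
      exact Or.inl ⟨Or.inl ⟨m, rfl, h1⟩, by simpa using hN⟩
end
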